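/- Let d ≥ 1, D := {1,...,d} and let B ⊆ D be nonempty. There is a constant C depending only on d such that for every measurable f : I^d → ℝ with ∫_{I^d} |f| log^{|B|}(1+|f|) < ∞ and every n = (n_1,...,n_d) with each n_j ≥ 2, one has ‖(L_{n_B}∘R_{n_{B'}})(f)‖_{L^1(I^d)} ≤ C (1 + ∫_{I^d} |f| log^{|B|}(1+|f|)). -/

import Mathlib

open MeasureTheory Filter

noncomputable section

/-- The unit cube `[0,1)^d`. -/
def unitCube (d : ℕ) : Set (Fin d → ℝ) := Set.univ.pi fun _ => Set.Ico (0:ℝ) 1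

/-- Lebesgue measure restricted to the unit cube `[0,1)^d`. -/
def cubeMeasure (d : ℕ) : Measure (Fin d → ℝ) := volume.restrict (unitCube d)

/-- The `1`-periodic function equal to `1` on `[0,1/2)` and to `-1` on `[1/2,1)`. -/
def r0 (x : ℝ) : ℝ := if Int.fract x < 1/2 then 1 else -1

/-- The Rademacher functions. -/
def rademacher (n : ℕ) (x : ℝ) : ℝ := r0 (2 ^ n * x)

/-- The Walsh functions (in Paley enumeration, via binary digits). -/
def walsh (n : ℕ) (x : ℝ) : ℝ :=
  ∏ k ∈ Finset.range (n + 1), if n.testBit k then rademacher k x else 1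

/-- The Walsh–Dirichlet kernel `D_n`. -/
def dirichletKernel (n : ℕ) (x : ℝ) : ℝ := ∑ k ∈ Finset.range n, walsh k x

/-- `l_n = ∑_{k=1}^{n-1} 1/k`. -/
def logSum (n : ℕ) : ℝ := ∑ k ∈ Finset.Icc 1 (n - 1), (1 : ℝ) / k

/-- The Nörlund logarithmic kernel `F_n`. -/
def FKernel (n : ℕ) (u : ℝ) : ℝ :=
  (1 / logSum n) * ∑ i ∈ Finset.Ico 1 n, dirichletKernel (n - i) u / i

/-- The Riesz logarithmic kernel `G_n`. -/
def GKernel (n : ℕ) (u : ℝ) : ℝ :=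
  (1 / logSum n) * ∑ i ∈ Finset.Ico 1 n, dirichletKernel i u / i

/-- Walsh–Fourier coefficient of `f` on the unit cube. -/
def walshCoef {d : ℕ} (f : (Fin d → ℝ) → ℝ) (j : Fin d → ℕ) : ℝ :=
  ∫ x, f x * ∏ i, walsh (j i) (x i) ∂(cubeMeasure d)

/-- Rectangular partial sums of the multiple Walsh–Fourier series. -/
def rectPartialSum {d : ℕ} (f : (Fin d → ℝ) → ℝ) (N : Fin d → ℕ) (x : Fin d → ℝ) : ℝ :=
  ∑ j ∈ Fintype.piFinset (fun i => Finset.range (N i)),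
    walshCoef f j * ∏ i, walsh (j i) (x i)

/-- The mixed logarithmic means `(L_{n_B} ∘ R_{n_{B'}})(f)`. -/
def mixedLogMean {d : ℕ} (B : Finset (Fin d)) (f : (Fin d → ℝ) → ℝ)
    (n : Fin d → ℕ) (x : Fin d → ℝ) : ℝ :=
  (∏ j, logSum (n j))⁻¹ *
    ∑ i ∈ Fintype.piFinset (fun j => Finset.Ico 1 (n j)),
      rectPartialSum f (fun j => if j ∈ B then n j - i j else i j) x / ∏ j, (i j : ℝ)

/-- A Young function: convex, continuous, even, vanishing at `0`, with
`Q(u)/u → ∞` at `+∞` and `Q(u)/u → 0` at `0`. -/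
structure YoungFunction where
  toFun : ℝ → ℝ
  nonneg : ∀ u, 0 ≤ toFun u
  convexOn : ConvexOn ℝ Set.univ toFun
  continuous : Continuous toFun
  even : ∀ u, toFun (-u) = toFun u
  map_zero : toFun 0 = 0
  tendsto_atTop : Tendsto (fun u => toFun u / u) atTop atTop
  tendsto_zero : Tendsto (fun u => toFun u / u) (nhdsWithin 0 {(0:ℝ)}ᶜ) (nhds 0)

/-- The set of admissible constants `k` in the Luxemburg norm of `f`. -/
def orliczSet {d : ℕ} (Q : YoungFunction) (f : (Fin d → ℝ) → ℝ) : Set ℝ :=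
  {k | 0 < k ∧ Integrable (fun x => Q.toFun (|f x| / k)) (cubeMeasure d) ∧
    ∫ x, Q.toFun (|f x| / k) ∂(cubeMeasure d) ≤ 1}

/-- `f` belongs to the Orlicz space `L_Q(I^d)`. -/
def MemOrlicz {d : ℕ} (Q : YoungFunction) (f : (Fin d → ℝ) → ℝ) : Prop :=
  Measurable f ∧ (orliczSet Q f).Nonempty

/-- The Luxemburg norm on the Orlicz space `L_Q(I^d)`. -/
def orliczNorm {d : ℕ} (Q : YoungFunction) (f : (Fin d → ℝ) → ℝ) : ℝ :=
  sInf (orliczSet Q f)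

/-- `p_n = 2^{2n} + 2^{2n-2} + ⋯ + 2^0`. -/
def pIdx (n : ℕ) : ℕ := ∑ k ∈ Finset.range (n + 1), 4 ^ k

/-- `m̃ = ⌊ l_{p_{⌊m/2⌋}-1}/16 - 2^15 ⌋`. -/
def mTilde (m : ℕ) : ℤ := ⌊logSum (pIdx (m / 2) - 1) / 16 - 2 ^ 15⌋

/-- `m₀ = min{m : m̃ > 1}`. -/
def m₀ : ℕ := sInf {m : ℕ | 1 < mTilde m}

/-- The set `Ω_n`. -/
def Omega (n : ℕ) : Set ℝ :=
  ⋃ m ∈ Finset.Icc n (2 * n),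
    Set.Ico ((2:ℝ) ^ (-(m:ℤ) - 1) + (2:ℝ) ^ (-(m:ℤ) - mTilde m)) ((2:ℝ) ^ (-(m:ℤ)))

/-- `k`-th binary digit of `x` (the expansion not terminating in `1`'s). -/
def binDigit (k : ℕ) (x : ℝ) : ℕ := (⌊x * 2 ^ (k + 1)⌋).toNat % 2

/-- Dyadic addition on `[0,1)`. -/
def dyadicAdd (x t : ℝ) : ℝ :=
  ∑' k : ℕ, |(binDigit k x : ℝ) - (binDigit k t : ℝ)| / 2 ^ (k + 1)

/-- Dyadic convolution `f ∗ K` on `[0,1)`. -/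
def dyadicConv (f K : ℝ → ℝ) (x : ℝ) : ℝ :=
  ∫ t in Set.Ico (0:ℝ) 1, f t * K (dyadicAdd x t)

/-- Lebesgue measure restricted to `[0,1)`. -/
def unitMeasure : Measure ℝ := volume.restrict (Set.Ico (0:ℝ) 1)

/-- A set `A ⊆ L_Q(I^d)` is nowhere dense w.r.t. the Luxemburg norm. -/
def OrliczNowhereDense {d : ℕ} (Q : YoungFunction) (A : Set ((Fin d → ℝ) → ℝ)) : Prop :=
  ∀ f, MemOrlicz Q f → ∀ ε > 0, ∃ g, MemOrlicz Q g ∧ ∃ δ > 0,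
    (∀ h, MemOrlicz Q h → orliczNorm Q (h - g) < δ → orliczNorm Q (h - f) < ε) ∧
    (∀ h, MemOrlicz Q h → orliczNorm Q (h - g) < δ → h ∉ A)

/-- A set `A ⊆ L_Q(I^d)` is of first Baire category (meager) w.r.t. the Luxemburg norm. -/
def OrliczMeager {d : ℕ} (Q : YoungFunction) (A : Set ((Fin d → ℝ) → ℝ)) : Prop :=
  ∃ F : ℕ → Set ((Fin d → ℝ) → ℝ), (∀ k, OrliczNowhereDense Q (F k)) ∧ A ⊆ ⋃ k, F k

/-- Burkholder's weak-type function. -/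
def uB (x y : ℝ) : ℝ := if |x| + |y| < 1 then y ^ 2 - x ^ 2 else 1 - 2 * |x|

lemma uB_le (x y : ℝ) : uB x y ≤ 1 - 2 * |x| := by
  unfold uB
  split_ifs with h
  · have h1 : |y| ≤ 1 - |x| := by linarith
    have h2 : |y| ^ 2 ≤ (1 - |x|) ^ 2 := pow_le_pow_left₀ (abs_nonneg y) h1 2
    rw [sq_abs] at h2
    nlinarith [sq_abs x]
  · exact le_rfl

lemma uB_tangent (x y : ℝ) : ∃ A B : ℝ, ∀ h k : ℝ, |k| ≤ |h| →
    uB (x + h) (y + k) ≤ uB x y + A * h + B * k := by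
  by_cases hxy : |x| + |y| < 1
  · refine ⟨-2 * x, 2 * y, fun h k hk => ?_⟩
    have hk2 : k ^ 2 ≤ h ^ 2 := sq_le_sq.mpr hk
    have e : uB x y = y ^ 2 - x ^ 2 := by simp [uB, hxy]
    rw [e]
    by_cases hD : |x + h| + |y + k| < 1
    · have e2 : uB (x + h) (y + k) = (y + k) ^ 2 - (x + h) ^ 2 := by simp [uB, hD]
      rw [e2]; nlinarith
    · have e2 : uB (x + h) (y + k) = 1 - 2 * |x + h| := by simp [uB, hD]
      rw [e2]
      push Not at hD
      have key : (1 - |x + h|) ^ 2 ≤ (y + k) ^ 2 + h ^ 2 - k ^ 2 := by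
        by_cases h1 : |x + h| ≤ 1
        · have : (1 - |x + h|) ^ 2 ≤ |y + k| ^ 2 :=
            pow_le_pow_left₀ (by linarith) (by linarith) 2
          rw [sq_abs] at this
          linarith
        · push Not at h1
          have t := abs_add_le x h
          have h2 : (|x + h| - 1) ^ 2 ≤ (|h| - |y|) ^ 2 :=
            pow_le_pow_left₀ (by linarith) (by linarith) 2
          have h3 : -(|y| * |h|) ≤ y * k := by
            have := neg_abs_le (y * k)
            rw [abs_mul] at this
            have := mul_le_mul_of_nonneg_left hk (abs_nonneg y)
            linarith
          nlinarith [sq_abs h, sq_abs y]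
      nlinarith [sq_abs (x + h)]
  · have e : uB x y = 1 - 2 * |x| := by simp [uB, hxy]
    rcases le_total 0 x with hx | hx
    · refine ⟨-2, 0, fun h k hk => ?_⟩
      have := uB_le (x + h) (y + k)
      have := le_abs_self (x + h)
      rw [e, abs_of_nonneg hx]; linarith
    · refine ⟨2, 0, fun h k hk => ?_⟩
      have := uB_le (x + h) (y + k)
      have := neg_abs_le (x + h)
      rw [e, abs_of_nonpos hx]; linarith

lemma uB_zigzag (x y h k : ℝ) (hk : |k| ≤ |h|) :
    uB (x + h) (y + k) + uB (x - h) (y - k) ≤ 2 * uB x y := by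
  obtain ⟨A, B, H⟩ := uB_tangent x y
  have h1 := H h k hk
  have h2 := H (-h) (-k) (by simpa using hk)
  rw [← sub_eq_add_neg, ← sub_eq_add_neg] at h2
  linarith

lemma uB_zero_right (x : ℝ) : uB x 0 ≤ 0 := by
  unfold uB
  split_ifs with h
  · nlinarith [sq_nonneg x]
  · simp at h; linarith

lemma uB_int (p : ℝ) (hp1 : 1 < p) (hp2 : p < 2) (x y : ℝ) :
    IntegrableOn (fun t : ℝ => t ^ (p - 1) * uB (x / t) (y / t)) (Set.Ioi 0) ∧
    ∫ t in Set.Ioi (0:ℝ), t ^ (p - 1) * uB (x / t) (y / t) =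
      (2 / (p * (2 - p))) * ((|x| + |y|) ^ (p - 1) * (|y| - |x| / (p - 1))) := by
  rcases eq_or_lt_of_le (add_nonneg (abs_nonneg x) (abs_nonneg y)) with h0 | hs
  · have hx : x = 0 := by
      have := abs_nonneg x; have := abs_nonneg y; exact abs_eq_zero.mp (by linarith)
    have hy : y = 0 := by
      have := abs_nonneg x; have := abs_nonneg y; exact abs_eq_zero.mp (by linarith)
    subst hx hy
    simp [uB]
  set s := |x| + |y| with hsdef
  have hU : Set.Ioi (0:ℝ) = Set.Ioc 0 s ∪ Set.Ioi s := (Set.Ioc_union_Ioi_eq_Ioi hs.le).symm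
  have hdisj : Disjoint (Set.Ioc (0:ℝ) s) (Set.Ioi s) := Set.Ioc_disjoint_Ioi le_rfl
  have e1 : Set.EqOn (fun t : ℝ => t ^ (p - 1) - 2 * |x| * t ^ (p - 2))
      (fun t : ℝ => t ^ (p - 1) * uB (x / t) (y / t)) (Set.Ioc 0 s) := by
    intro t ht
    have ht0 : 0 < t := ht.1
    have hn : ¬ (|x / t| + |y / t| < 1) := by
      rw [abs_div, abs_div, abs_of_pos ht0, ← add_div, div_lt_one ht0]
      exact not_lt.mpr ht.2
    have hp : t ^ (p - 1) = t ^ (p - 2) * t := by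
      rw [← Real.rpow_add_one ht0.ne']; congr 1; ring
    have eu : uB (x / t) (y / t) = 1 - 2 * (|x| / t) := by
      unfold uB; rw [if_neg hn, abs_div, abs_of_pos ht0]
    simp only [eu, hp]
    field_simp
  have e2 : Set.EqOn (fun t : ℝ => (y ^ 2 - x ^ 2) * t ^ (p - 3))
      (fun t : ℝ => t ^ (p - 1) * uB (x / t) (y / t)) (Set.Ioi s) := by
    intro t ht
    have ht0 : 0 < t := lt_trans hs ht
    have hn : (|x / t| + |y / t| < 1) := by
      rw [abs_div, abs_div, abs_of_pos ht0, ← add_div, div_lt_one ht0]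
      exact ht
    have hp : t ^ (p - 1) = t ^ (p - 3) * t ^ 2 := by
      rw [← Real.rpow_natCast t 2, ← Real.rpow_add ht0]; congr 1; push_cast; ring
    simp only [uB, hn, if_true, hp]
    field_simp
  have i1a : IntervalIntegrable (fun t : ℝ => t ^ (p - 1)) volume 0 s :=
    intervalIntegral.intervalIntegrable_rpow' (by linarith)
  have i1b : IntervalIntegrable (fun t : ℝ => t ^ (p - 2)) volume 0 s :=
    intervalIntegral.intervalIntegrable_rpow' (by linarith)
  have i1 : IntervalIntegrable (fun t : ℝ => t ^ (p - 1) - 2 * |x| * t ^ (p - 2)) volume 0 s :=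
    i1a.sub (i1b.const_mul _)
  have I1 : IntegrableOn (fun t : ℝ => t ^ (p - 1) * uB (x / t) (y / t)) (Set.Ioc 0 s) :=
    ((intervalIntegrable_iff_integrableOn_Ioc_of_le hs.le).mp i1).congr_fun e1 measurableSet_Ioc
  have i2 : IntegrableOn (fun t : ℝ => (y ^ 2 - x ^ 2) * t ^ (p - 3)) (Set.Ioi s) :=
    (integrableOn_Ioi_rpow_of_lt (by linarith) hs).const_mul _
  have I2 : IntegrableOn (fun t : ℝ => t ^ (p - 1) * uB (x / t) (y / t)) (Set.Ioi s) :=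
    i2.congr_fun e2 measurableSet_Ioi
  refine ⟨by rw [hU]; exact I1.union I2, ?_⟩
  rw [hU, setIntegral_union hdisj measurableSet_Ioi I1 I2,
    ← setIntegral_congr_fun measurableSet_Ioc e1, ← setIntegral_congr_fun measurableSet_Ioi e2,
    ← intervalIntegral.integral_of_le hs.le, intervalIntegral.integral_sub i1a (i1b.const_mul _),
    intervalIntegral.integral_const_mul, integral_rpow (Or.inl (by linarith)),
    integral_rpow (Or.inl (by linarith)), integral_const_mul,
    integral_Ioi_rpow_of_lt (by linarith) hs]
  rw [Real.zero_rpow (by linarith), Real.zero_rpow (by linarith)]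
  have q1 : p - 1 + 1 = p := by ring
  have q2 : p - 2 + 1 = p - 1 := by ring
  have q3 : p - 3 + 1 = p - 2 := by ring
  rw [q1, q2, q3]
  have hp' : s ^ (p - 1) = s ^ (p - 2) * s := by
    rw [← Real.rpow_add_one hs.ne']; congr 1; ring
  have hp'' : s ^ p = s ^ (p - 2) * s ^ 2 := by
    rw [← Real.rpow_natCast s 2, ← Real.rpow_add hs]; congr 1; push_cast; ring
  rw [hp', hp'']
  have n1 : p - 1 ≠ 0 := by linarith
  have n2 : p - 2 ≠ 0 := by linarith
  have n3 : 2 - p ≠ 0 := by linarith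
  have n4 : p ≠ 0 := by linarith
  have hyx : y ^ 2 - x ^ 2 = s * (|y| - |x|) := by
    rw [hsdef, ← sq_abs y, ← sq_abs x]; ring
  have r2 : -s ^ (p - 2) / (p - 2) = s ^ (p - 2) / (2 - p) := by
    rw [← neg_sub 2 p, neg_div_neg_eq]
  rw [hyx, r2]
  have hy' : |y| = s - |x| := by rw [hsdef]; ring
  rw [hy']
  field_simp
  ring

lemma uB_lower (p : ℝ) (hp1 : 1 < p) (hp2 : p < 2) (x y : ℝ) :
    |y| ^ p / 2 ≤ (|x| + |y|) ^ (p - 1) * (|y| - |x| / (p - 1)) + 2 * (3 * |x| / (p - 1)) ^ p := by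
  have hp0 : 0 < p - 1 := by linarith
  have hx := abs_nonneg x
  have hy := abs_nonneg y
  have hn : 0 ≤ (3 * |x| / (p - 1)) ^ p := by positivity
  have split : ∀ z : ℝ, 0 ≤ z → z ^ p = z ^ (p - 1) * z := by
    intro z hz
    rcases eq_or_lt_of_le hz with h | h
    · rw [← h, Real.zero_rpow (by linarith)]; simp
    · rw [← Real.rpow_add_one h.ne']; congr 1; ring
  by_cases h : 2 * |x| / (p - 1) ≤ |y|
  · have h1 : |y| / 2 ≤ |y| - |x| / (p - 1) := by
      have : 2 * |x| / (p - 1) = 2 * (|x| / (p - 1)) := by ring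
      linarith
    have h2 : |y| ^ (p - 1) ≤ (|x| + |y|) ^ (p - 1) :=
      Real.rpow_le_rpow hy (by linarith) hp0.le
    have h3 : |y| ^ (p - 1) * (|y| / 2) ≤ (|x| + |y|) ^ (p - 1) * (|y| - |x| / (p - 1)) :=
      mul_le_mul h2 h1 (by positivity) (by positivity)
    rw [split _ hy]
    linarith
  · push Not at h
    have g1 : |x| / (p - 1) ≤ 3 * |x| / (p - 1) := by gcongr; linarith
    have g0 : |x| ≤ |x| / (p - 1) := by
      rw [le_div_iff₀ hp0]; nlinarith
    have g2 : |x| + |y| ≤ 3 * |x| / (p - 1) := by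
      have : 3 * |x| / (p - 1) = |x| / (p - 1) + 2 * |x| / (p - 1) := by ring
      linarith
    have g3 : (|x| + |y|) ^ (p - 1) * (|x| / (p - 1)) ≤ (3 * |x| / (p - 1)) ^ p := by
      rw [split _ (by positivity)]
      exact mul_le_mul (Real.rpow_le_rpow (by linarith) g2 hp0.le) g1 (by positivity)
        (by positivity)
    have g4 : |y| ^ p ≤ (3 * |x| / (p - 1)) ^ p :=
      Real.rpow_le_rpow hy (by linarith) (by linarith)
    have g5 : 0 ≤ (|x| + |y|) ^ (p - 1) * |y| := by positivity
    nlinarith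

/-- From the weak-type function to `ℓ^p` bounds. -/
lemma lp_of_uB {ι : Type*} (S : Finset ι) (f g : ι → ℝ)
    (H : ∀ t : ℝ, 0 < t → ∑ i ∈ S, uB (f i / t) (g i / t) ≤ 0)
    (p : ℝ) (hp1 : 1 < p) (hp2 : p < 2) :
    ∑ i ∈ S, |g i| ^ p ≤ (12 / (p - 1)) ^ p * ∑ i ∈ S, |f i| ^ p := by
  have hp0 : 0 < p - 1 := by linarith
  have h2p : 0 < 2 - p := by linarith
  have h1 : ∑ i ∈ S, ∫ t in Set.Ioi (0:ℝ), t ^ (p - 1) * uB (f i / t) (g i / t) ≤ 0 := by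
    rw [← integral_finsetSum S (fun i _ => (uB_int p hp1 hp2 (f i) (g i)).1)]
    refine setIntegral_nonpos measurableSet_Ioi (fun t ht => ?_)
    rw [← Finset.mul_sum]
    exact mul_nonpos_of_nonneg_of_nonpos (Real.rpow_nonneg (le_of_lt ht) _) (H t ht)
  simp only [fun i => (uB_int p hp1 hp2 (f i) (g i)).2] at h1
  rw [← Finset.mul_sum] at h1
  have h2 : ∑ i ∈ S, ((|f i| + |g i|) ^ (p - 1) * (|g i| - |f i| / (p - 1))) ≤ 0 := by
    by_contra hc
    push Not at hc
    have : 0 < 2 / (p * (2 - p)) := by positivity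
    nlinarith [mul_pos this hc]
  have h3 : ∑ i ∈ S, |g i| ^ p / 2 ≤ ∑ i ∈ S, ((|f i| + |g i|) ^ (p - 1) * (|g i| - |f i| / (p - 1)) + 2 * (3 * |f i| / (p - 1)) ^ p) :=
    Finset.sum_le_sum (fun i _ => uB_lower p hp1 hp2 (f i) (g i))
  rw [Finset.sum_add_distrib, ← Finset.sum_div] at h3
  have h4 : ∑ i ∈ S, 4 * (3 * |f i| / (p - 1)) ^ p ≤ (12 / (p - 1)) ^ p * ∑ i ∈ S, |f i| ^ p := by
    rw [Finset.mul_sum]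
    refine Finset.sum_le_sum (fun i _ => ?_)
    have e1 : 3 * |f i| / (p - 1) = (3 / (p - 1)) * |f i| := by ring
    have e2 : 12 / (p - 1) = 4 * (3 / (p - 1)) := by ring
    rw [e1, e2, Real.mul_rpow (by positivity) (by positivity),
      Real.mul_rpow (by positivity) (by positivity)]
    have : (4:ℝ) ≤ 4 ^ p := by
      conv_lhs => rw [← Real.rpow_one 4]
      exact Real.rpow_le_rpow_of_exponent_le (by norm_num) hp1.le
    have h5 : 0 ≤ (3 / (p - 1)) ^ p * |f i| ^ p := by positivity
    nlinarith
  rw [← Finset.mul_sum] at h4 h3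
  linarith

/-- Discrete Walsh functions: `a` is the index of the dyadic interval of length `2^{-M}`. -/
def dW : ℕ → ℕ → ℕ → ℝ
  | 0, _, _ => 1
  | M + 1, k, a => (if k.testBit M then (-1) ^ a else 1) * dW M k (a / 2)

lemma dW_sq (M k a : ℕ) : dW M k a * dW M k a = 1 := by
  induction M generalizing a with
  | zero => simp [dW]
  | succ M ih =>
    simp only [dW]
    have := ih (a / 2)
    split_ifs
    · have h : ((-1:ℝ) ^ a) * (-1) ^ a = 1 := by rw [← mul_pow]; simp
      linear_combination ((-1:ℝ) ^ a * (-1) ^ a) * this + h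
    · linear_combination this

lemma dW_abs (M k a : ℕ) : |dW M k a| = 1 := by
  have h := dW_sq M k a
  rw [← abs_mul_abs_self] at h
  nlinarith [abs_nonneg (dW M k a)]

lemma dW_congr (M k k' a : ℕ) (h : ∀ s < M, k.testBit s = k'.testBit s) :
    dW M k a = dW M k' a := by
  induction M generalizing a with
  | zero => simp [dW]
  | succ M ih =>
    simp only [dW]
    rw [h M (by omega), ih _ (fun s hs => h s (by omega))]

/-- Discrete Dirichlet kernel. -/
def dD (M N a b : ℕ) : ℝ := ∑ k ∈ Finset.range N, dW M k a * dW M k b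

lemma dD_comm (M N a b : ℕ) : dD M N a b = dD M N b a := by
  unfold dD; exact Finset.sum_congr rfl (fun _ _ => mul_comm _ _)

lemma dW_low (M k a : ℕ) (hk : k < 2 ^ M) : dW (M + 1) k a = dW M k (a / 2) := by
  simp [dW, Nat.testBit_lt_two_pow hk]

lemma dW_high (M k a : ℕ) (hk : k < 2 ^ M) :
    dW (M + 1) (2 ^ M + k) a = (-1) ^ a * dW M k (a / 2) := by
  have h1 : (2 ^ M + k).testBit M = true := by
    rw [Nat.testBit_two_pow_add_eq, Nat.testBit_lt_two_pow hk]; rfl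
  simp only [dW, h1, if_true]
  congr 1
  exact dW_congr _ _ _ _ (fun s hs => Nat.testBit_two_pow_add_gt hs k)

lemma dD_low (M N a b : ℕ) (hN : N ≤ 2 ^ M) : dD (M + 1) N a b = dD M N (a / 2) (b / 2) := by
  unfold dD
  refine Finset.sum_congr rfl (fun k hk => ?_)
  have := Finset.mem_range.mp hk
  rw [dW_low _ _ _ (by omega), dW_low _ _ _ (by omega)]

lemma dD_high (M N a b : ℕ) (hN : N ≤ 2 ^ M) :
    dD (M + 1) (2 ^ M + N) a b =
      dD M (2 ^ M) (a / 2) (b / 2) + (-1) ^ (a + b) * dD M N (a / 2) (b / 2) := by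
  have h := dD_low M (2 ^ M) a b le_rfl
  rw [← h]
  unfold dD
  rw [Finset.sum_range_add, Finset.mul_sum]
  congr 1
  refine Finset.sum_congr rfl (fun k hk => ?_)
  have := Finset.mem_range.mp hk
  rw [dW_high _ _ _ (by omega), dW_high _ _ _ (by omega), pow_add]
  ring

lemma dD_full (M a b : ℕ) (ha : a < 2 ^ M) (hb : b < 2 ^ M) :
    dD M (2 ^ M) a b = if a = b then 2 ^ M else 0 := by
  induction M generalizing a b with
  | zero =>
    have h1 : a = 0 := by simpa using ha
    have h2 : b = 0 := by simpa using hb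
    subst h1 h2
    simp [dD, dW]
  | succ M ih =>
    have e : 2 ^ (M + 1) = 2 ^ M + 2 ^ M := by ring
    rw [e, dD_high _ _ _ _ le_rfl, ih (a / 2) (b / 2) (by omega) (by omega)]
    by_cases h : a / 2 = b / 2
    · rw [if_pos h]
      by_cases hab : a = b
      · subst hab
        rw [if_pos rfl, ← two_mul, pow_mul]
        norm_num; ring
      · rw [if_neg hab]
        have : Odd (a + b) := by
          rw [Nat.odd_iff]; omega
        rw [this.neg_one_pow]; ring
    · rw [if_neg h, if_neg (by rintro rfl; exact h rfl)]; ring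

lemma sum_range_double (M : ℕ) (g : ℕ → ℝ) :
    ∑ a ∈ Finset.range (2 ^ (M + 1)), g a =
      ∑ a ∈ Finset.range (2 ^ M), (g (2 * a) + g (2 * a + 1)) := by
  have : 2 ^ (M + 1) = 2 * 2 ^ M := by ring
  rw [this]
  generalize 2 ^ M = m
  induction m with
  | zero => simp
  | succ m ih => rw [Finset.sum_range_succ, ← ih, Nat.mul_succ, Finset.sum_range_succ, Finset.sum_range_succ, add_assoc]

lemma half0 (a : ℕ) : 2 * a / 2 = a := by omega
lemma half1 (a : ℕ) : (2 * a + 1) / 2 = a := by omega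

/-- The martingale transform `w_N S_N (w_N ·)`. -/
def dT (M N : ℕ) (φ : ℕ → ℝ) (a : ℕ) : ℝ :=
  ((2:ℝ) ^ M)⁻¹ * ∑ b ∈ Finset.range (2 ^ M), dW M N a * dD M N a b * dW M N b * φ b

lemma dT_low (M N : ℕ) (hN : N < 2 ^ M) (φ : ℕ → ℝ) (a : ℕ) :
    dT (M + 1) N φ a = dT M N (fun b => (φ (2 * b) + φ (2 * b + 1)) / 2) (a / 2) := by
  unfold dT
  rw [sum_range_double, pow_succ, mul_inv, mul_assoc, Finset.mul_sum]
  congr 1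
  refine Finset.sum_congr rfl (fun b _ => ?_)
  rw [dD_low _ _ _ _ hN.le, dD_low _ _ _ _ hN.le, dW_low _ _ _ hN, dW_low _ _ _ hN,
    dW_low _ _ _ hN, half0, half1]
  ring

lemma dT_high (M N : ℕ) (hN : N < 2 ^ M) (φ : ℕ → ℝ) (a : ℕ) (ha : a < 2 ^ (M + 1)) :
    dT (M + 1) (2 ^ M + N) φ a =
      dT M N (fun b => (φ (2 * b) + φ (2 * b + 1)) / 2) (a / 2) +
      (φ a - (φ (2 * (a / 2)) + φ (2 * (a / 2) + 1)) / 2) := by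
  have ha2 : a / 2 < 2 ^ M := by rw [pow_succ] at ha; omega
  have key : φ a - (φ (2 * (a / 2)) + φ (2 * (a / 2) + 1)) / 2 =
      ((2:ℝ) ^ M)⁻¹ * ∑ b ∈ Finset.range (2 ^ M), (dW M N (a / 2) * dW M N b) *
        dD M (2 ^ M) (a / 2) b * ((-1) ^ a * (φ (2 * b) - φ (2 * b + 1)) / 2) := by
    rw [Finset.sum_eq_single (a / 2)]
    · rw [dD_full _ _ _ ha2 ha2, if_pos rfl, dW_sq]
      have : (2:ℝ) ^ M ≠ 0 := by positivity
      field_simp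
      rcases Nat.even_or_odd' a with ⟨c, rfl | rfl⟩
      · rw [half0, pow_mul]; norm_num; ring
      · rw [half1, pow_add, pow_mul]; norm_num; ring
    · intro b hb hne
      rw [dD_full _ _ _ ha2 (Finset.mem_range.mp hb), if_neg (Ne.symm hne)]; ring
    · intro h; exact absurd (Finset.mem_range.mpr ha2) h
  rw [key]
  unfold dT
  rw [sum_range_double, pow_succ, mul_inv, mul_assoc, ← mul_add, ← Finset.sum_add_distrib,
    Finset.mul_sum]
  congr 1
  refine Finset.sum_congr rfl (fun b _ => ?_)
  rw [dD_high _ _ _ _ hN.le, dD_high _ _ _ _ hN.le, dW_high _ _ _ hN, dW_high _ _ _ hN,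
    dW_high _ _ _ hN, half0, half1]
  have h : ((-1:ℝ) ^ a) * (-1) ^ a = 1 := by rw [← mul_pow]; simp
  have hb : ((-1:ℝ) ^ (2 * b)) = 1 := by rw [pow_mul]; simp
  simp only [pow_add, hb]
  generalize (-1:ℝ) ^ a = σ at *
  generalize dW M N (a / 2) = w
  generalize dW M N b = v
  linear_combination (w * v * dD M N (a / 2) b * ((φ (2 * b) + φ (2 * b + 1)) / 2)) * h

lemma dT_uB (M N : ℕ) (hN : N < 2 ^ M) (φ : ℕ → ℝ) :
    ∑ a ∈ Finset.range (2 ^ M), uB (φ a) (dT M N φ a) ≤ 0 := by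
  induction M generalizing N φ with
  | zero =>
    have h1 : N = 0 := by simpa using hN
    subst h1
    simp [dT, dD, uB_zero_right]
  | succ M ih =>
    rw [sum_range_double]
    set E : ℕ → ℝ := fun b => (φ (2 * b) + φ (2 * b + 1)) / 2 with hE
    by_cases h : N < 2 ^ M
    · have := ih N h E
      have h2 : ∑ a ∈ Finset.range (2 ^ M), (uB (φ (2 * a)) (dT (M + 1) N φ (2 * a)) +
          uB (φ (2 * a + 1)) (dT (M + 1) N φ (2 * a + 1))) ≤
          ∑ a ∈ Finset.range (2 ^ M), 2 * uB (E a) (dT M N E a) := by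
        refine Finset.sum_le_sum (fun a _ => ?_)
        rw [dT_low _ _ h, dT_low _ _ h, half0, half1]
        have := uB_zigzag (E a) (dT M N E a) ((φ (2 * a) - φ (2 * a + 1)) / 2) 0 (by simp)
        rw [add_zero, sub_zero] at this
        have a1 : E a + (φ (2 * a) - φ (2 * a + 1)) / 2 = φ (2 * a) := by simp only [hE]; ring
        have a2 : E a - (φ (2 * a) - φ (2 * a + 1)) / 2 = φ (2 * a + 1) := by simp only [hE]; ring
        rw [a1, a2] at this
        exact this
      rw [← Finset.mul_sum] at h2
      linarith
    · obtain ⟨N', rfl⟩ : ∃ N', N = 2 ^ M + N' := ⟨N - 2 ^ M, by omega⟩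
      have hN' : N' < 2 ^ M := by rw [pow_succ] at hN; omega
      have := ih N' hN' E
      have h2 : ∑ a ∈ Finset.range (2 ^ M), (uB (φ (2 * a)) (dT (M + 1) (2 ^ M + N') φ (2 * a)) +
          uB (φ (2 * a + 1)) (dT (M + 1) (2 ^ M + N') φ (2 * a + 1))) ≤
          ∑ a ∈ Finset.range (2 ^ M), 2 * uB (E a) (dT M N' E a) := by
        refine Finset.sum_le_sum (fun a ha => ?_)
        have ha' := Finset.mem_range.mp ha
        rw [dT_high _ _ hN' _ _ (by rw [pow_succ]; omega),
          dT_high _ _ hN' _ _ (by rw [pow_succ]; omega), half0, half1]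
        have := uB_zigzag (E a) (dT M N' E a) ((φ (2 * a) - φ (2 * a + 1)) / 2)
          ((φ (2 * a) - φ (2 * a + 1)) / 2) le_rfl
        have a1 : E a + (φ (2 * a) - φ (2 * a + 1)) / 2 = φ (2 * a) := by simp only [hE]; ring
        have a2 : E a - (φ (2 * a) - φ (2 * a + 1)) / 2 = φ (2 * a + 1) := by simp only [hE]; ring
        have a3 : φ (2 * a) - (φ (2 * a) + φ (2 * a + 1)) / 2 = (φ (2 * a) - φ (2 * a + 1)) / 2 := by
          ring
        have a4 : φ (2 * a + 1) - (φ (2 * a) + φ (2 * a + 1)) / 2 =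
            -((φ (2 * a) - φ (2 * a + 1)) / 2) := by ring
        rw [a1, a2] at this
        rw [a3, a4, ← sub_eq_add_neg]
        exact this
      rw [← Finset.mul_sum] at h2
      linarith

lemma dT_smul (M N : ℕ) (φ : ℕ → ℝ) (t : ℝ) (a : ℕ) :
    dT M N (fun b => φ b / t) a = dT M N φ a / t := by
  unfold dT
  rw [mul_div_assoc, Finset.sum_div]
  congr 1
  exact Finset.sum_congr rfl (fun b _ => by ring)

/-- `ℓ^p` bound for the partial sum operators. -/
lemma dD_lp (M N : ℕ) (hN : N < 2 ^ M) (g : ℕ → ℝ) (p : ℝ) (hp1 : 1 < p) (hp2 : p < 2) :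
    ∑ a ∈ Finset.range (2 ^ M),
      |∑ b ∈ Finset.range (2 ^ M), (((2:ℝ) ^ M)⁻¹ * dD M N a b) * g b| ^ p ≤
      (12 / (p - 1)) ^ p * ∑ a ∈ Finset.range (2 ^ M), |g a| ^ p := by
  have h := lp_of_uB (Finset.range (2 ^ M)) (fun a => dW M N a * g a)
    (dT M N (fun a => dW M N a * g a)) (fun t ht => by
      have := dT_uB M N hN (fun a => (dW M N a * g a) / t)
      simpa only [dT_smul] using this) p hp1 hp2
  have e1 : ∀ a, |dW M N a * g a| = |g a| := fun a => by rw [abs_mul, dW_abs, one_mul]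
  have e2 : ∀ a, |dT M N (fun a => dW M N a * g a) a| =
      |∑ b ∈ Finset.range (2 ^ M), (((2:ℝ) ^ M)⁻¹ * dD M N a b) * g b| := by
    intro a
    have : dT M N (fun a => dW M N a * g a) a = dW M N a *
        ∑ b ∈ Finset.range (2 ^ M), (((2:ℝ) ^ M)⁻¹ * dD M N a b) * g b := by
      unfold dT
      rw [Finset.mul_sum, Finset.mul_sum]
      refine Finset.sum_congr rfl (fun b _ => ?_)
      linear_combination (((2:ℝ) ^ M)⁻¹ * dW M N a * dD M N a b * g b) * dW_sq M N b
    rw [this, abs_mul, dW_abs, one_mul]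
  simpa only [e1, e2] using h

def dP (M m a b : ℕ) : ℝ := ∑ j ∈ Finset.range m, dD M j a b

lemma dP_comm (M N a b : ℕ) : dP M N a b = dP M N b a := by
  unfold dP; exact Finset.sum_congr rfl (fun _ _ => dD_comm _ _ _ _)

lemma dP_low (M m a b : ℕ) (hm : m ≤ 2 ^ M) : dP (M + 1) m a b = dP M m (a / 2) (b / 2) := by
  unfold dP
  refine Finset.sum_congr rfl (fun k hk => ?_)
  have := Finset.mem_range.mp hk
  rw [dD_low _ _ _ _ (by omega)]

lemma dP_high (M m a b : ℕ) (hm : m ≤ 2 ^ M) :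
    dP (M + 1) (2 ^ M + m) a b = dP M (2 ^ M) (a / 2) (b / 2) +
      m * dD M (2 ^ M) (a / 2) (b / 2) + (-1) ^ (a + b) * dP M m (a / 2) (b / 2) := by
  have h := dP_low M (2 ^ M) a b le_rfl
  rw [← h]
  unfold dP
  rw [Finset.sum_range_add, add_assoc, Finset.mul_sum]
  congr 1
  have : (m : ℝ) * dD M (2 ^ M) (a / 2) (b / 2) =
      ∑ j ∈ Finset.range m, dD M (2 ^ M) (a / 2) (b / 2) := by simp
  rw [this, ← Finset.sum_add_distrib]
  refine Finset.sum_congr rfl (fun k hk => ?_)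
  have := Finset.mem_range.mp hk
  rw [dD_high _ _ _ _ (by omega)]

lemma dD_full_row (M a : ℕ) (ha : a < 2 ^ M) :
    ∑ b ∈ Finset.range (2 ^ M), |dD M (2 ^ M) a b| = 2 ^ M := by
  rw [Finset.sum_eq_single a]
  · rw [dD_full _ _ _ ha ha, if_pos rfl, abs_of_pos (by positivity)]
  · intro b hb hne
    rw [dD_full _ _ _ ha (Finset.mem_range.mp hb), if_neg (Ne.symm hne), abs_zero]
  · intro h; exact absurd (Finset.mem_range.mpr ha) h

lemma neg_one_cases (n : ℕ) : ((-1:ℝ)) ^ n = 1 ∨ ((-1:ℝ)) ^ n = -1 := neg_one_pow_eq_or ℝ n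

lemma dP_full_row (M a : ℕ) (ha : a < 2 ^ M) :
    ∑ b ∈ Finset.range (2 ^ M), |dP M (2 ^ M) a b| ≤ 2 ^ M * 2 ^ M := by
  induction M generalizing a with
  | zero => simp [dP, dD]
  | succ M ih =>
    have e : 2 ^ (M + 1) = 2 ^ M + 2 ^ M := by ring
    have ha2 : a / 2 < 2 ^ M := by omega
    rw [sum_range_double]
    have h : ∑ b ∈ Finset.range (2 ^ M), (|dP (M + 1) (2 ^ (M + 1)) a (2 * b)| +
        |dP (M + 1) (2 ^ (M + 1)) a (2 * b + 1)|) ≤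
        ∑ b ∈ Finset.range (2 ^ M), (2 * |dP M (2 ^ M) (a / 2) b| +
          2 * 2 ^ M * |dD M (2 ^ M) (a / 2) b|) := by
      refine Finset.sum_le_sum (fun b _ => ?_)
      rw [e, dP_high _ _ _ _ le_rfl, dP_high _ _ _ _ le_rfl, half0, half1]
      have hb : ((-1:ℝ) ^ (2 * b)) = 1 := by rw [pow_mul]; simp
      simp only [pow_add, hb]
      push_cast
      generalize dP M (2 ^ M) (a / 2) b = P
      have hq : (2:ℝ) ^ M * |dD M (2 ^ M) (a / 2) b| = |2 ^ M * dD M (2 ^ M) (a / 2) b| := by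
        rw [abs_mul, abs_of_pos (by positivity : (0:ℝ) < 2 ^ M)]
      rw [mul_assoc 2 ((2:ℝ) ^ M) _, hq]
      generalize (2:ℝ) ^ M * dD M (2 ^ M) (a / 2) b = Q
      rcases neg_one_cases a with h | h <;> rw [h]
      · have e1 : P + Q + 1 * 1 * P = 2 * P + Q := by ring
        have e2 : P + Q + 1 * (1 * (-1) ^ 1) * P = Q := by ring
        rw [e1, e2]
        have := abs_add_le (2 * P) Q
        rw [abs_mul, abs_two] at this
        linarith
      · have e1 : P + Q + (-1) * 1 * P = Q := by ring
        have e2 : P + Q + (-1) * (1 * (-1) ^ 1) * P = 2 * P + Q := by ring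
        rw [e1, e2]
        have := abs_add_le (2 * P) Q
        rw [abs_mul, abs_two] at this
        linarith
    refine h.trans ?_
    rw [Finset.sum_add_distrib, ← Finset.mul_sum, ← Finset.mul_sum, dD_full_row _ _ ha2]
    have := ih _ ha2
    rw [pow_succ]
    linarith

lemma dP_low_row (M m a : ℕ) (hm : m ≤ 2 ^ M) :
    ∑ b ∈ Finset.range (2 ^ (M + 1)), |dP (M + 1) m a b| =
      2 * ∑ b ∈ Finset.range (2 ^ M), |dP M m (a / 2) b| := by
  rw [sum_range_double, Finset.mul_sum]
  refine Finset.sum_congr rfl (fun b _ => ?_)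
  rw [dP_low _ _ _ _ hm, dP_low _ _ _ _ hm, half0, half1]; ring

lemma dP_row (M m a : ℕ) (ha : a < 2 ^ M) (hm : m ≤ 2 ^ M) :
    ∑ b ∈ Finset.range (2 ^ M), |dP M m a b| ≤ 2 * (2 ^ M * 2 ^ M) := by
  induction M generalizing a m with
  | zero =>
    have : m ≤ 1 := by simpa using hm
    interval_cases m <;> simp [dP, dD]
  | succ M ih =>
    have e : 2 ^ (M + 1) = 2 ^ M + 2 ^ M := by ring
    have ha2 : a / 2 < 2 ^ M := by omega
    by_cases h : m ≤ 2 ^ M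
    · rw [dP_low_row _ _ _ h, pow_succ]
      have := ih m _ ha2 h
      have : (0:ℝ) < 2 ^ M * 2 ^ M := by positivity
      linarith
    · obtain ⟨m', rfl⟩ : ∃ m', m = 2 ^ M + m' := ⟨m - 2 ^ M, by omega⟩
      have hm' : m' ≤ 2 ^ M := by omega
      rw [sum_range_double]
      have hc : (m' : ℝ) ≤ 2 ^ M := by exact_mod_cast hm'
      have h : ∑ b ∈ Finset.range (2 ^ M), (|dP (M + 1) (2 ^ M + m') a (2 * b)| +
        |dP (M + 1) (2 ^ M + m') a (2 * b + 1)|) ≤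
        ∑ b ∈ Finset.range (2 ^ M), (2 * |dP M (2 ^ M) (a / 2) b| +
          2 * 2 ^ M * |dD M (2 ^ M) (a / 2) b| + 2 * |dP M m' (a / 2) b|) := by
        refine Finset.sum_le_sum (fun b _ => ?_)
        have gen : ∀ P Q R σ : ℝ, |σ| = 1 → |P + m' * Q + σ * R| ≤ |P| + 2 ^ M * |Q| + |R| := by
          intro P Q R σ hσ
          have h1 := abs_add_three P (m' * Q) (σ * R)
          rw [abs_mul, abs_mul, hσ, Nat.abs_cast] at h1
          have := mul_le_mul_of_nonneg_right hc (abs_nonneg Q)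
          linarith
        rw [dP_high _ _ _ _ hm', dP_high _ _ _ _ hm', half0, half1]
        have h1 := gen (dP M (2 ^ M) (a / 2) b) (dD M (2 ^ M) (a / 2) b) (dP M m' (a / 2) b)
          ((-1) ^ (a + 2 * b)) (by simp)
        have h2 := gen (dP M (2 ^ M) (a / 2) b) (dD M (2 ^ M) (a / 2) b) (dP M m' (a / 2) b)
          ((-1) ^ (a + (2 * b + 1))) (by simp)
        linarith
      refine h.trans ?_
      rw [Finset.sum_add_distrib, Finset.sum_add_distrib, ← Finset.mul_sum, ← Finset.mul_sum,
        ← Finset.mul_sum, dD_full_row _ _ ha2]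
      have h1 := ih m' _ ha2 hm'
      have h2 := dP_full_row _ _ ha2
      rw [pow_succ]
      linarith

lemma dP_row' (M m a : ℕ) (ha : a < 2 ^ M) (hm : m ≤ 2 ^ M) :
    ∑ b ∈ Finset.range (2 ^ M), |dP M m a b| ≤ 4 * m * 2 ^ M := by
  induction M generalizing a m with
  | zero =>
    have : m ≤ 1 := by simpa using hm
    interval_cases m <;> simp [dP, dD]
  | succ M ih =>
    have e : 2 ^ (M + 1) = 2 ^ M + 2 ^ M := by ring
    have ha2 : a / 2 < 2 ^ M := by omega
    by_cases h : m ≤ 2 ^ M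
    · rw [dP_low_row _ _ _ h, pow_succ]
      have := ih m _ ha2 h
      linarith
    · have h1 := dP_row _ _ _ ha hm
      have hc : (2:ℝ) ^ M ≤ m := by
        have : 2 ^ M ≤ m := by omega
        exact_mod_cast this
      have : (0:ℝ) < 2 ^ M := by positivity
      refine h1.trans ?_
      rw [pow_succ (2:ℝ)]
      nlinarith

lemma riesz_abel (M n a b : ℕ) : 
    ∑ i ∈ Finset.Ico 1 (n + 2), dD M i a b / i = dP M (n + 2) a b / (n + 1 : ℕ) +
      ∑ i ∈ Finset.Ico 1 (n + 1), dP M (i + 1) a b / ((i + 1 : ℕ) * i) := by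
  induction n with
  | zero => simp [dP, Finset.sum_range_succ, dD]
  | succ n ih =>
    rw [Finset.sum_Ico_succ_top (by omega), ih, Finset.sum_Ico_succ_top (by omega : 1 ≤ n + 1)]
    have : dP M (n + 1 + 2) a b = dP M (n + 2) a b + dD M (n + 2) a b := by
      unfold dP; rw [Finset.sum_range_succ]
    rw [this]
    have e : n + 1 + 1 = n + 2 := rfl
    rw [e]
    have h1 : ((n + 1 : ℕ) : ℝ) ≠ 0 := by positivity
    have h2 : ((n + 2 : ℕ) : ℝ) ≠ 0 := by positivity
    field_simp
    push_cast
    ring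

lemma logSum_succ (n : ℕ) : logSum (n + 2) = ∑ i ∈ Finset.Ico 1 (n + 1), (1:ℝ) / i + 1 / (n + 1 : ℕ) := by
  unfold logSum
  have : Finset.Icc 1 (n + 2 - 1) = Finset.Ico 1 (n + 2) := by
    ext; simp; omega
  rw [this, Finset.sum_Ico_succ_top (by omega)]

lemma logSum_eq (n : ℕ) : logSum n = ∑ i ∈ Finset.Ico 1 n, (1:ℝ) / i := by
  unfold logSum
  refine Finset.sum_congr ?_ (fun _ _ => rfl)
  ext; simp; omega

lemma one_le_logSum (n : ℕ) (hn : 2 ≤ n) : 1 ≤ logSum n := by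
  rw [logSum_eq]
  have := Finset.single_le_sum (f := fun i : ℕ => (1:ℝ) / i) (s := Finset.Ico 1 n)
    (fun i _ => by positivity) (a := 1) (by simp; omega)
  simpa using this

lemma riesz_row (M n a : ℕ) (ha : a < 2 ^ M) (hn : 2 ≤ n) (hn' : n ≤ 2 ^ M) :
    ∑ b ∈ Finset.range (2 ^ M), |∑ i ∈ Finset.Ico 1 n, dD M i a b / i| ≤
      12 * logSum n * 2 ^ M := by
  obtain ⟨n, rfl⟩ : ∃ m, n = m + 2 := ⟨n - 2, by omega⟩
  have hl := one_le_logSum _ hn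
  have h : ∑ b ∈ Finset.range (2 ^ M), |∑ i ∈ Finset.Ico 1 (n + 2), dD M i a b / i| ≤
      ∑ b ∈ Finset.range (2 ^ M), (|dP M (n + 2) a b| / (n + 1 : ℕ) +
        ∑ i ∈ Finset.Ico 1 (n + 1), |dP M (i + 1) a b| / ((i + 1 : ℕ) * i)) := by
    refine Finset.sum_le_sum (fun b _ => ?_)
    rw [riesz_abel]
    refine (abs_add_le _ _).trans (add_le_add ?_ ?_)
    · rw [abs_div, Nat.abs_cast]
    · refine (Finset.abs_sum_le_sum_abs _ _).trans (Finset.sum_le_sum (fun i _ => ?_))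
      rw [abs_div, abs_mul, Nat.abs_cast, Nat.abs_cast]
  refine h.trans ?_
  rw [Finset.sum_add_distrib, ← Finset.sum_div, Finset.sum_comm]
  have h1 : (∑ b ∈ Finset.range (2 ^ M), |dP M (n + 2) a b|) / (n + 1 : ℕ) ≤ 8 * 2 ^ M := by
    rw [div_le_iff₀ (by positivity)]
    refine (dP_row' _ _ _ ha hn').trans ?_
    push_cast
    have : (0:ℝ) < 2 ^ M := by positivity
    have : (0:ℝ) ≤ n := by positivity
    nlinarith [mul_nonneg this (by positivity : (0:ℝ) ≤ 2 ^ M)]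
  have h2 : ∑ i ∈ Finset.Ico 1 (n + 1), ∑ b ∈ Finset.range (2 ^ M),
      |dP M (i + 1) a b| / ((i + 1 : ℕ) * i) ≤
      ∑ i ∈ Finset.Ico 1 (n + 1), (4 * 2 ^ M) * ((1:ℝ) / i) := by
    refine Finset.sum_le_sum (fun i hi => ?_)
    have hi' := Finset.mem_Ico.mp hi
    have : (0:ℝ) < i := by exact_mod_cast (by omega : 0 < i)
    rw [← Finset.sum_div, div_le_iff₀ (by positivity)]
    refine (dP_row' _ _ _ ha (by omega)).trans (le_of_eq ?_)
    field_simp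
  rw [← Finset.mul_sum] at h2
  have h3 : ∑ i ∈ Finset.Ico 1 (n + 1), (1:ℝ) / i ≤ logSum (n + 2) := by
    rw [logSum_succ]
    have : (0:ℝ) ≤ 1 / (n + 1 : ℕ) := by positivity
    linarith
  have : (0:ℝ) < 2 ^ M := by positivity
  nlinarith

/-- `ℓ^p` boundedness of a finite kernel. -/
def BddP {X : Type*} [Fintype X] (p c : ℝ) (K : X → X → ℝ) : Prop :=
  ∀ g : X → ℝ, ∑ a, |∑ b, K a b * g b| ^ p ≤ c * ∑ a, |g a| ^ p

lemma rpow_split (p : ℝ) (hp : 1 < p) (z : ℝ) (hz : 0 ≤ z) : z ^ p = z ^ (p - 1) * z := by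
  rcases eq_or_lt_of_le hz with h | h
  · rw [← h, Real.zero_rpow (by linarith)]; simp
  · rw [← Real.rpow_add_one h.ne']; congr 1; ring

lemma BddP_schur {X : Type*} [Fintype X] (p C : ℝ) (hp : 1 < p) (hC : 0 ≤ C) (K : X → X → ℝ)
    (h1 : ∀ a, ∑ b, |K a b| ≤ C) (h2 : ∀ b, ∑ a, |K a b| ≤ C) : BddP p (C ^ p) K := by
  intro g
  have hp0 : 0 < p := by linarith
  have key : ∀ a, |∑ b, K a b * g b| ^ p ≤ C ^ (p - 1) * ∑ b, |K a b| * |g b| ^ p := by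
    intro a
    have s1 : |∑ b, K a b * g b| ≤ ∑ b, |K a b| * |g b| :=
      (Finset.abs_sum_le_sum_abs _ _).trans (le_of_eq (by simp only [abs_mul]))
    have s2 := Real.inner_le_weight_mul_Lp_of_nonneg (Finset.univ) hp.le (fun b => |K a b|)
      (fun b => |g b|) (fun _ => abs_nonneg _) (fun _ => abs_nonneg _)
    have n1 : 0 ≤ ∑ b, |K a b| := Finset.sum_nonneg (fun _ _ => abs_nonneg _)
    have n2 : 0 ≤ ∑ b, |K a b| * |g b| ^ p :=
      Finset.sum_nonneg (fun _ _ => by positivity)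
    have s3 := Real.rpow_le_rpow (abs_nonneg _) (s1.trans s2) hp0.le
    rw [Real.mul_rpow (by positivity) (by positivity), ← Real.rpow_mul n1, ← Real.rpow_mul n2,
      inv_mul_cancel₀ hp0.ne', Real.rpow_one] at s3
    have e : (1 - p⁻¹) * p = p - 1 := by field_simp
    rw [e] at s3
    refine s3.trans (mul_le_mul_of_nonneg_right ?_ n2)
    exact Real.rpow_le_rpow n1 (h1 a) (by linarith)
  refine (Finset.sum_le_sum (fun a _ => key a)).trans ?_
  rw [← Finset.mul_sum, Finset.sum_comm, rpow_split p hp C hC, mul_assoc]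
  refine mul_le_mul_of_nonneg_left ?_ (by positivity)
  rw [Finset.mul_sum]
  refine Finset.sum_le_sum (fun b _ => ?_)
  rw [← Finset.sum_mul]
  exact mul_le_mul_of_nonneg_right (h2 b) (by positivity)

lemma BddP_avg {X ι : Type*} [Fintype X] (p c : ℝ) (hp : 1 < p) (S : Finset ι) (w : ι → ℝ)
    (hw : ∀ i ∈ S, 0 ≤ w i) (hw1 : ∑ i ∈ S, w i = 1) (K : ι → X → X → ℝ)
    (h : ∀ i ∈ S, BddP p c (K i)) : BddP p c (fun a b => ∑ i ∈ S, w i * K i a b) := by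
  intro g
  have hp0 : 0 < p := by linarith
  have key : ∀ a, |∑ b, (∑ i ∈ S, w i * K i a b) * g b| ^ p ≤
      ∑ i ∈ S, w i * |∑ b, K i a b * g b| ^ p := by
    intro a
    have e : ∑ b, (∑ i ∈ S, w i * K i a b) * g b = ∑ i ∈ S, w i * ∑ b, K i a b * g b := by
      simp only [Finset.sum_mul, Finset.mul_sum]
      rw [Finset.sum_comm]
      exact Finset.sum_congr rfl (fun _ _ => Finset.sum_congr rfl (fun _ _ => by ring))
    have s1 : |∑ b, (∑ i ∈ S, w i * K i a b) * g b| ≤ ∑ i ∈ S, w i * |∑ b, K i a b * g b| := by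
      rw [e]
      refine (Finset.abs_sum_le_sum_abs _ _).trans (Finset.sum_le_sum (fun i hi => ?_))
      rw [abs_mul, abs_of_nonneg (hw i hi)]
    exact (Real.rpow_le_rpow (abs_nonneg _) s1 hp0.le).trans
      (Real.rpow_arith_mean_le_arith_mean_rpow S w _ hw hw1 (fun _ _ => abs_nonneg _) hp.le)
  refine (Finset.sum_le_sum (fun a _ => key a)).trans ?_
  rw [Finset.sum_comm]
  calc ∑ i ∈ S, ∑ a, w i * |∑ b, K i a b * g b| ^ p
      ≤ ∑ i ∈ S, w i * (c * ∑ a, |g a| ^ p) := by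
        refine Finset.sum_le_sum (fun i hi => ?_)
        rw [← Finset.mul_sum]
        exact mul_le_mul_of_nonneg_left (h i hi g) (hw i hi)
    _ = c * ∑ a, |g a| ^ p := by rw [← Finset.sum_mul, hw1, one_mul]

lemma sum_cons {X : Type*} [Fintype X] (d : ℕ) (F : (Fin (d + 1) → X) → ℝ) :
    ∑ a, F a = ∑ x : X, ∑ a' : Fin d → X, F (Fin.cons x a') := by
  rw [← Fintype.sum_prod_type', ← (Fin.consEquiv (fun _ : Fin (d + 1) => X)).sum_comp]
  rfl

lemma BddP_tensor {X : Type*} [Fintype X] (p : ℝ) (d : ℕ) (c : Fin d → ℝ) (hc : ∀ j, 0 ≤ c j)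
    (K : Fin d → X → X → ℝ) (h : ∀ j, BddP p (c j) (K j)) :
    BddP p (∏ j, c j) (fun (a b : Fin d → X) => ∏ j, K j (a j) (b j)) := by
  induction d with
  | zero => intro g; simp
  | succ d ih =>
    intro g
    have ih' := ih (fun j => c j.succ) (fun j => hc _) (fun j => K j.succ) (fun j => h _)
    rw [sum_cons, sum_cons (F := fun a => |g a| ^ p), Fin.prod_univ_succ]
    have e : ∀ (x : X) (a' : Fin d → X),
        ∑ b : Fin (d + 1) → X, (∏ j, K j ((Fin.cons x a' : Fin (d + 1) → X) j) (b j)) * g b =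
        ∑ y, K 0 x y * ∑ b' : Fin d → X, (∏ j : Fin d, K j.succ (a' j) (b' j)) *
          g (Fin.cons y b') := by
      intro x a'
      rw [sum_cons]
      refine Finset.sum_congr rfl (fun y _ => ?_)
      rw [Finset.mul_sum]
      refine Finset.sum_congr rfl (fun b' _ => ?_)
      rw [Fin.prod_univ_succ]
      simp only [Fin.cons_zero, Fin.cons_succ]
      ring
    simp only [e]
    rw [Finset.sum_comm]
    calc _ ≤ ∑ a' : Fin d → X, c 0 * ∑ y, |∑ b' : Fin d → X,
            (∏ j : Fin d, K j.succ (a' j) (b' j)) * g (Fin.cons y b')| ^ p :=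
          Finset.sum_le_sum (fun a' _ => h 0 _)
      _ = c 0 * ∑ y, ∑ a' : Fin d → X, |∑ b' : Fin d → X,
            (∏ j : Fin d, K j.succ (a' j) (b' j)) * g (Fin.cons y b')| ^ p := by
          rw [← Finset.mul_sum, Finset.sum_comm]
      _ ≤ c 0 * ∑ y, ((∏ j : Fin d, c j.succ) * ∑ a' : Fin d → X, |g (Fin.cons y a')| ^ p) := by
          refine mul_le_mul_of_nonneg_left (Finset.sum_le_sum (fun y _ => ?_)) (hc 0)
          exact ih' (fun b' => g (Fin.cons y b'))
      _ = _ := by rw [← Finset.mul_sum, mul_assoc]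

/-- One-dimensional kernels on dyadic cells. -/
def K1 (M n : ℕ) (q : Prop) [Decidable q] (a b : ℕ) : ℝ :=
  (logSum n)⁻¹ * ∑ i ∈ Finset.Ico 1 n, dD M (if q then n - i else i) a b / i

lemma K1_lp_pos (M n : ℕ) (hn : 2 ≤ n) (hnM : n < 2 ^ M) (q : Prop) [Decidable q] (hq : q)
    (p : ℝ) (hp1 : 1 < p) (hp2 : p < 2) :
    BddP p ((12 / (p - 1)) ^ p) (fun a b : Fin (2 ^ M) => ((2:ℝ) ^ M)⁻¹ * K1 M n q a b) := by
  have hl := one_le_logSum n hn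
  have := BddP_avg (X := Fin (2 ^ M)) p ((12 / (p - 1)) ^ p) hp1 (Finset.Ico 1 n)
    (fun i => (logSum n)⁻¹ * (1 / (i:ℝ))) (fun i _ => by positivity)
    (by rw [← Finset.mul_sum, ← logSum_eq, inv_mul_cancel₀ (by linarith)])
    (fun i a b => ((2:ℝ) ^ M)⁻¹ * dD M (n - i) a b) (fun i hi g => by
      have hi' := Finset.mem_Ico.mp hi
      have h := dD_lp M (n - i) (by omega) (fun a => if h : a < 2 ^ M then g ⟨a, h⟩ else 0) p hp1 hp2
      simpa only [Finset.sum_range, Fin.is_lt, dite_true, Fin.eta] using h)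
  convert this using 3 with a b
  simp only [K1, if_pos hq, Finset.mul_sum]
  exact Finset.sum_congr rfl (fun _ _ => by ring)

lemma K1_lp_neg (M n : ℕ) (hn : 2 ≤ n) (hnM : n < 2 ^ M) (q : Prop) [Decidable q] (hq : ¬ q)
    (p : ℝ) (hp1 : 1 < p) :
    BddP p ((12:ℝ) ^ p) (fun a b : Fin (2 ^ M) => ((2:ℝ) ^ M)⁻¹ * K1 M n q a b) := by
  have hl := one_le_logSum n hn
  have row : ∀ a : Fin (2 ^ M), ∑ b : Fin (2 ^ M), |((2:ℝ) ^ M)⁻¹ * K1 M n q a b| ≤ 12 := by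
    intro a
    have h := riesz_row M n a a.2 hn hnM.le
    rw [Finset.sum_range] at h
    simp only [K1, if_neg hq, abs_mul, ← Finset.mul_sum]
    rw [abs_of_pos (by positivity), abs_of_pos (by positivity), inv_mul_le_iff₀ (by positivity),
      inv_mul_le_iff₀ (by positivity)]
    linarith
  have sym : ∀ a b, K1 M n q a b = K1 M n q b a := by
    intro a b
    unfold K1
    simp only [dD_comm M _ a b]
  refine BddP_schur p 12 hp1 (by norm_num) _ row (fun b => ?_)
  simp only [fun a : Fin (2 ^ M) => sym a b]
  exact row b

lemma yano_step {Y : Type*} [Fintype Y] [Nonempty Y] (k : ℕ) (A : ℝ) (hA : 0 ≤ A)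
    (K : Y → Y → ℝ) (hK : BddP (1 + 1 / ((k:ℝ) + 2)) (A ^ (1 + 1 / ((k:ℝ) + 2))) K)
    (G : Y → ℝ) (hG : ∀ a, |G a| ≤ 2 ^ (k + 1)) (α : ℝ)
    (hα : (Fintype.card Y : ℝ)⁻¹ * ∑ a, |G a| ≤ α) :
    (Fintype.card Y : ℝ)⁻¹ * ∑ a, |∑ b, K a b * G b| ≤
      A * (2 * (4 * α + (4⁻¹) ^ (k + 2))) := by
  set p : ℝ := 1 + 1 / ((k:ℝ) + 2) with hp
  have hk2 : (0:ℝ) < (k:ℝ) + 2 := by positivity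
  have hp1 : 1 < p := by
    have : 0 < 1 / ((k:ℝ) + 2) := by positivity
    linarith
  have hp0 : 0 < p := by linarith
  have hV : (0:ℝ) < Fintype.card Y := by exact_mod_cast Fintype.card_pos
  have hα0 : 0 ≤ α := le_trans (by positivity) hα
  have hz : 0 < 4 * α + ((4:ℝ)⁻¹) ^ (k + 2) := by positivity
  rw [← Real.rpow_le_rpow_iff (by positivity) (by positivity) hp0]
  have j := Real.rpow_arith_mean_le_arith_mean_rpow Finset.univ
    (fun _ : Y => (Fintype.card Y : ℝ)⁻¹) (fun a => |∑ b, K a b * G b|)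
    (fun _ _ => by positivity) (by simp) (fun _ _ => abs_nonneg _)
    hp1.le
  rw [← Finset.mul_sum, ← Finset.mul_sum] at j
  refine j.trans ?_
  have j2 := mul_le_mul_of_nonneg_left (hK G) (inv_nonneg.mpr hV.le)
  refine j2.trans ?_
  have b1 : ((2:ℝ) ^ (k + 1)) ^ (p - 1) ≤ 2 := by
    rw [← Real.rpow_natCast, ← Real.rpow_mul (by norm_num)]
    conv_rhs => rw [← Real.rpow_one 2]
    refine Real.rpow_le_rpow_of_exponent_le (by norm_num) ?_
    have : p - 1 = 1 / ((k:ℝ) + 2) := by rw [hp]; ring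
    rw [this, mul_one_div, div_le_one hk2]
    push_cast; linarith
  have b2 : ∑ a, |G a| ^ p ≤ 2 * ∑ a, |G a| := by
    rw [Finset.mul_sum]
    refine Finset.sum_le_sum (fun a _ => ?_)
    rw [rpow_split p hp1 _ (abs_nonneg _)]
    refine mul_le_mul_of_nonneg_right ?_ (abs_nonneg _)
    exact (Real.rpow_le_rpow (abs_nonneg _) (hG a) (by linarith)).trans b1
  have b3 : α ≤ (4 * α + ((4:ℝ)⁻¹) ^ (k + 2)) ^ p := by
    rw [rpow_split p hp1 _ hz.le]
    have c1 : (4:ℝ)⁻¹ ≤ (4 * α + ((4:ℝ)⁻¹) ^ (k + 2)) ^ (p - 1) := by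
      have c2 : (((4:ℝ)⁻¹) ^ (k + 2)) ^ (p - 1) = 4⁻¹ := by
        rw [← Real.rpow_natCast, ← Real.rpow_mul (by norm_num)]
        have : ((k + 2 : ℕ) : ℝ) * (p - 1) = 1 := by
          rw [hp]; push_cast; field_simp; ring
        rw [this, Real.rpow_one]
      calc (4:ℝ)⁻¹ = (((4:ℝ)⁻¹) ^ (k + 2)) ^ (p - 1) := c2.symm
        _ ≤ _ := Real.rpow_le_rpow (by positivity) (by linarith) (by linarith)
    have c3 : 4 * α ≤ 4 * α + ((4:ℝ)⁻¹) ^ (k + 2) := by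
      have : (0:ℝ) < ((4:ℝ)⁻¹) ^ (k + 2) := by positivity
      linarith
    have := mul_le_mul c1 c3 (by positivity) (by positivity)
    linarith
  have b4 : (2:ℝ) ≤ 2 ^ p := by
    conv_lhs => rw [← Real.rpow_one 2]
    exact Real.rpow_le_rpow_of_exponent_le (by norm_num) hp1.le
  rw [Real.mul_rpow hA (by positivity), Real.mul_rpow (by norm_num) hz.le]
  calc (Fintype.card Y : ℝ)⁻¹ * (A ^ p * ∑ a, |G a| ^ p)
      ≤ (Fintype.card Y : ℝ)⁻¹ * (A ^ p * (2 * ∑ a, |G a|)) := by gcongr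
    _ = A ^ p * (2 * ((Fintype.card Y : ℝ)⁻¹ * ∑ a, |G a|)) := by ring
    _ ≤ A ^ p * (2 ^ p * (4 * α + ((4:ℝ)⁻¹) ^ (k + 2)) ^ p) := by
        gcongr
        exact hα.trans b3

lemma rademacher_eq (s : ℕ) (x : ℝ) (hx : 0 ≤ x) :
    rademacher s x = (-1) ^ ⌊(2:ℝ) ^ (s + 1) * x⌋₊ := by
  unfold rademacher r0
  have e : (2:ℝ) ^ (s + 1) * x = 2 * (2 ^ s * x) := by ring
  rw [e]
  have hy : 0 ≤ 2 ^ s * x := by positivity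
  generalize 2 ^ s * x = y at hy
  have h1 : (⌊y⌋₊ : ℝ) + Int.fract y = y := by
    rw [natCast_floor_eq_intCast_floor hy]; exact Int.floor_add_fract y
  have h0 := Int.fract_nonneg y
  have h2 := Int.fract_lt_one y
  split_ifs with h
  · have : ⌊2 * y⌋₊ = 2 * ⌊y⌋₊ := by
      rw [Nat.floor_eq_iff (by positivity)]
      push_cast
      constructor <;> linarith
    rw [this, pow_mul]; simp
  · push Not at h
    have : ⌊2 * y⌋₊ = 2 * ⌊y⌋₊ + 1 := by
      rw [Nat.floor_eq_iff (by positivity)]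
      push_cast
      constructor <;> linarith
    rw [this, pow_add, pow_mul]; simp

lemma dW_eq_prod (M k : ℕ) (x : ℝ) (hx : 0 ≤ x) :
    dW M k ⌊(2:ℝ) ^ M * x⌋₊ =
      ∏ s ∈ Finset.range M, if k.testBit s then rademacher s x else 1 := by
  induction M with
  | zero => simp [dW]
  | succ M ih =>
    rw [Finset.prod_range_succ, ← ih, rademacher_eq M x hx]
    have : ⌊(2:ℝ) ^ (M + 1) * x⌋₊ / 2 = ⌊(2:ℝ) ^ M * x⌋₊ := by
      rw [← Nat.floor_div_ofNat]
      congr 1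
      rw [pow_succ]
      ring
    simp only [dW]
    rw [this, mul_comm]

lemma walsh_eq (M k : ℕ) (hk : k < 2 ^ M) (x : ℝ) (hx : 0 ≤ x) :
    walsh k x = dW M k ⌊(2:ℝ) ^ M * x⌋₊ := by
  rw [dW_eq_prod M k x hx]
  unfold walsh
  have h1 : ∀ L L', L ≤ L' → (∀ s, L ≤ s → k.testBit s = false) →
      ∏ s ∈ Finset.range L, (if k.testBit s then rademacher s x else 1) =
      ∏ s ∈ Finset.range L', if k.testBit s then rademacher s x else 1 := by
    intro L L' hL h
    refine Finset.prod_subset (Finset.range_subset_range.mpr hL) (fun s _ hs => ?_)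
    rw [h s (by simpa using hs)]; simp
  have b1 : ∀ s, M ≤ s → k.testBit s = false := fun s hs =>
    Nat.testBit_lt_two_pow (lt_of_lt_of_le hk (Nat.pow_le_pow_right (by norm_num) hs))
  have b2 : ∀ s, k + 1 ≤ s → k.testBit s = false := fun s hs =>
    Nat.testBit_lt_two_pow (lt_of_lt_of_le Nat.lt_two_pow_self
      (Nat.pow_le_pow_right (by norm_num) (by omega)))
  rcases le_total M (k + 1) with h | h
  · exact (h1 _ _ h b1).symm
  · exact h1 _ _ h b2

/-- Index of the dyadic cell. -/
def cell (d M : ℕ) (x : Fin d → ℝ) (j : Fin d) : Fin (2 ^ M) :=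
  ⟨⌊(2:ℝ) ^ M * x j⌋₊ % 2 ^ M, Nat.mod_lt _ (by positivity)⟩

lemma cell_val (d M : ℕ) (x : Fin d → ℝ) (hx : x ∈ unitCube d) (j : Fin d) :
    (cell d M x j : ℕ) = ⌊(2:ℝ) ^ M * x j⌋₊ := by
  have h := hx j (Set.mem_univ j)
  have : ⌊(2:ℝ) ^ M * x j⌋₊ < 2 ^ M := by
    rw [Nat.floor_lt (mul_nonneg (by positivity) h.1)]
    push_cast
    have := h.2
    have h2 : (0:ℝ) < 2 ^ M := by positivity
    nlinarith
  simp [cell, Nat.mod_eq_of_lt this]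

lemma measurable_cell (d M : ℕ) : Measurable (cell d M) := by
  refine measurable_pi_lambda _ (fun j => ?_)
  have h1 : Measurable (fun x : Fin d → ℝ => ⌊(2:ℝ) ^ M * x j⌋₊) :=
    Nat.measurable_floor.comp ((measurable_pi_apply j).const_mul _)
  have h2 : Measurable (fun m : ℕ => (⟨m % 2 ^ M, Nat.mod_lt _ (by positivity)⟩ : Fin (2 ^ M))) :=
    measurable_from_top
  exact h2.comp h1

lemma measurableSet_unitCube (d : ℕ) : MeasurableSet (unitCube d) :=
  MeasurableSet.univ_pi (fun _ => measurableSet_Ico)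

lemma cell_measure (d M : ℕ) (a : Fin d → Fin (2 ^ M)) :
    cubeMeasure d (cell d M ⁻¹' {a}) = ENNReal.ofReal (((2:ℝ) ^ M) ^ d)⁻¹ := by
  have hm : MeasurableSet (cell d M ⁻¹' {a}) := measurable_cell d M (measurableSet_singleton a)
  unfold cubeMeasure
  rw [Measure.restrict_apply hm]
  have hpos : (0:ℝ) < 2 ^ M := by positivity
  have e : cell d M ⁻¹' {a} ∩ unitCube d =
      Set.univ.pi fun j => Set.Ico (((a j : ℕ) : ℝ) / 2 ^ M) (((a j : ℕ) + 1 : ℝ) / 2 ^ M) := by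
    ext x
    constructor
    · rintro ⟨hx, hc⟩ j _
      have hx' : cell d M x = a := hx
      have hv := cell_val d M x hc j
      rw [hx'] at hv
      have h0 := (hc j (Set.mem_univ j)).1
      have := (Nat.floor_eq_iff (mul_nonneg hpos.le h0)).mp hv.symm
      rw [Set.mem_Ico, div_le_iff₀ hpos, lt_div_iff₀ hpos]
      constructor <;> linarith
    · intro hx
      have hx2 : ∀ j, ((a j : ℕ) : ℝ) ≤ 2 ^ M * x j ∧ 2 ^ M * x j < ((a j : ℕ) : ℝ) + 1 := by
        intro j
        have := hx j (Set.mem_univ j)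
        rw [Set.mem_Ico, div_le_iff₀ hpos, lt_div_iff₀ hpos] at this
        constructor <;> linarith
      have hc : x ∈ unitCube d := by
        intro j _
        have h1 := hx2 j
        have h2 : (((a j : ℕ) : ℝ)) + 1 ≤ 2 ^ M := by
          have := (a j).2
          exact_mod_cast this
        have h3 : (0:ℝ) ≤ ((a j : ℕ) : ℝ) := by positivity
        constructor
        · by_contra hneg
          push Not at hneg
          nlinarith
        · by_contra hneg
          push Not at hneg
          nlinarith
      refine ⟨?_, hc⟩
      change cell d M x = a
      ext j
      rw [cell_val d M x hc j, Nat.floor_eq_iff (mul_nonneg hpos.le (hc j (Set.mem_univ j)).1)]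
      exact hx2 j
  rw [e, volume_pi_pi]
  have : ∀ j, volume (Set.Ico (((a j : ℕ) : ℝ) / 2 ^ M) (((a j : ℕ) + 1 : ℝ) / 2 ^ M)) =
      ENNReal.ofReal ((2:ℝ) ^ M)⁻¹ := by
    intro j
    rw [Real.volume_Ico]
    congr 1
    field_simp
    ring
  simp only [this, Finset.prod_const, Finset.card_univ, Fintype.card_fin]
  rw [← ENNReal.ofReal_pow (by positivity), inv_pow]

instance (d : ℕ) : IsProbabilityMeasure (cubeMeasure d) := by
  constructor
  unfold cubeMeasure unitCube
  rw [Measure.restrict_apply_univ, volume_pi_pi]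
  simp

lemma integral_cell (d M : ℕ) (f : (Fin d → ℝ) → ℝ) (hf : Integrable f (cubeMeasure d))
    (h : (Fin d → Fin (2 ^ M)) → ℝ) :
    ∫ x, f x * h (cell d M x) ∂(cubeMeasure d) =
      ∑ b, h b * ∫ x in cell d M ⁻¹' {b}, f x ∂(cubeMeasure d) := by
  have hm : ∀ b, MeasurableSet (cell d M ⁻¹' {b}) :=
    fun b => measurable_cell d M (measurableSet_singleton b)
  have e : ∀ x, f x * h (cell d M x) = ∑ b, h b * (cell d M ⁻¹' {b}).indicator f x := by
    intro x
    rw [Finset.sum_eq_single (cell d M x)]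
    · rw [Set.indicator_of_mem (by simp), mul_comm]
    · intro b _ hb
      rw [Set.indicator_of_notMem (by simpa using hb.symm), mul_zero]
    · simp
  simp only [e]
  rw [integral_finsetSum _ (fun b _ => (hf.indicator (hm b)).const_mul _)]
  refine Finset.sum_congr rfl (fun b _ => ?_)
  rw [integral_const_mul, integral_indicator (hm b)]

lemma prod_walsh_eq (d M : ℕ) (j : Fin d → ℕ) (hj : ∀ i, j i < 2 ^ M) (x : Fin d → ℝ)
    (hx : x ∈ unitCube d) :
    ∏ i, walsh (j i) (x i) = ∏ i, dW M (j i) (cell d M x i) := by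
  refine Finset.prod_congr rfl (fun i _ => ?_)
  rw [walsh_eq M _ (hj i) _ (hx i (Set.mem_univ i)).1, cell_val d M x hx]

lemma walshCoef_eq (d M : ℕ) (f : (Fin d → ℝ) → ℝ) (hf : Integrable f (cubeMeasure d))
    (j : Fin d → ℕ) (hj : ∀ i, j i < 2 ^ M) :
    walshCoef f j = ∑ b : Fin d → Fin (2 ^ M), (∏ i, dW M (j i) (b i)) *
      ∫ x in cell d M ⁻¹' {b}, f x ∂(cubeMeasure d) := by
  rw [← integral_cell d M f hf (fun b => ∏ i, dW M (j i) (b i))]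
  unfold walshCoef
  have : ∀ᵐ x ∂(cubeMeasure d), x ∈ unitCube d := ae_restrict_mem (measurableSet_unitCube d)
  refine integral_congr_ae ?_
  filter_upwards [this] with x hx
  rw [prod_walsh_eq d M j hj x hx]

lemma rectPartialSum_eq (d M : ℕ) (f : (Fin d → ℝ) → ℝ) (hf : Integrable f (cubeMeasure d))
    (N : Fin d → ℕ) (hN : ∀ i, N i ≤ 2 ^ M) (x : Fin d → ℝ) (hx : x ∈ unitCube d) :
    rectPartialSum f N x = ∑ b : Fin d → Fin (2 ^ M), (∏ i, dD M (N i) (cell d M x i) (b i)) *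
      ∫ x in cell d M ⁻¹' {b}, f x ∂(cubeMeasure d) := by
  unfold rectPartialSum
  have h1 : ∀ j ∈ Fintype.piFinset (fun i => Finset.range (N i)),
      walshCoef f j * ∏ i, walsh (j i) (x i) =
      ∑ b : Fin d → Fin (2 ^ M), (∏ i, (dW M (j i) (cell d M x i) * dW M (j i) (b i))) *
      ∫ x in cell d M ⁻¹' {b}, f x ∂(cubeMeasure d) := by
    intro j hj
    have hj' : ∀ i, j i < 2 ^ M := fun i =>
      lt_of_lt_of_le (Finset.mem_range.mp (Fintype.mem_piFinset.mp hj i)) (hN i)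
    rw [walshCoef_eq d M f hf j hj', prod_walsh_eq d M j hj' x hx, Finset.sum_mul]
    refine Finset.sum_congr rfl (fun b _ => ?_)
    rw [Finset.prod_mul_distrib]; ring
  rw [Finset.sum_congr rfl h1, Finset.sum_comm]
  refine Finset.sum_congr rfl (fun b _ => ?_)
  rw [← Finset.sum_mul]
  congr 1
  unfold dD
  rw [Finset.prod_univ_sum]

lemma mixedLogMean_eq (d M : ℕ) (f : (Fin d → ℝ) → ℝ) (hf : Integrable f (cubeMeasure d))
    (B : Finset (Fin d)) (n : Fin d → ℕ) (hn : ∀ i, n i < 2 ^ M) (x : Fin d → ℝ)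
    (hx : x ∈ unitCube d) :
    mixedLogMean B f n x = ∑ b : Fin d → Fin (2 ^ M),
      (∏ i, (((2:ℝ) ^ M)⁻¹ * K1 M (n i) (i ∈ B) (cell d M x i) (b i))) *
      (((2:ℝ) ^ M) ^ d * ∫ x in cell d M ⁻¹' {b}, f x ∂(cubeMeasure d)) := by
  unfold mixedLogMean
  have h1 : ∀ i ∈ Fintype.piFinset (fun j => Finset.Ico 1 (n j)),
      rectPartialSum f (fun j => if j ∈ B then n j - i j else i j) x / ∏ j, (i j : ℝ) =
      ∑ b : Fin d → Fin (2 ^ M),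
        (∏ j, (dD M (if j ∈ B then n j - i j else i j) (cell d M x j) (b j) / (i j : ℝ))) *
        ∫ x in cell d M ⁻¹' {b}, f x ∂(cubeMeasure d) := by
    intro i hi
    rw [rectPartialSum_eq d M f hf _ (fun j => ?_) x hx, Finset.sum_div]
    · refine Finset.sum_congr rfl (fun b _ => ?_)
      rw [Finset.prod_div_distrib]; ring
    · have := Finset.mem_Ico.mp (Fintype.mem_piFinset.mp hi j)
      have := hn j
      split_ifs <;> omega
  rw [Finset.sum_congr rfl h1, Finset.sum_comm, Finset.mul_sum]
  refine Finset.sum_congr rfl (fun b _ => ?_)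
  rw [← Finset.sum_mul]
  have h2 := Finset.prod_univ_sum (fun j => Finset.Ico 1 (n j)) (fun j i =>
    dD M (if j ∈ B then n j - i else i) (cell d M x j) (b j) / (i : ℝ))
  rw [← h2, Finset.prod_mul_distrib]
  simp only [K1, Finset.prod_mul_distrib, Finset.prod_const, Finset.card_univ, Fintype.card_fin,
    Finset.prod_inv_distrib]
  have : ((2:ℝ) ^ M) ^ d ≠ 0 := by positivity
  rw [inv_pow]
  field_simp

lemma lintegral_cell (d M : ℕ) (H : (Fin d → Fin (2 ^ M)) → ℝ) (hH : ∀ a, 0 ≤ H a) :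
    ∫⁻ x, ENNReal.ofReal (H (cell d M x)) ∂(cubeMeasure d) =
      ENNReal.ofReal ((((2:ℝ) ^ M) ^ d)⁻¹ * ∑ a, H a) := by
  have hm : Measurable (fun a : Fin d → Fin (2 ^ M) => ENNReal.ofReal (H a)) :=
    measurable_of_countable _
  rw [← lintegral_map (μ := cubeMeasure d) hm (measurable_cell d M), lintegral_fintype]
  have : ∀ a, (Measure.map (cell d M) (cubeMeasure d)) {a} = ENNReal.ofReal (((2:ℝ) ^ M) ^ d)⁻¹ := by
    intro a
    rw [Measure.map_apply (measurable_cell d M) (measurableSet_singleton a), cell_measure]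
  simp only [this]
  rw [Finset.mul_sum, ENNReal.ofReal_sum_of_nonneg (fun a _ => by have := hH a; positivity)]
  refine Finset.sum_congr rfl (fun a _ => ?_)
  rw [mul_comm, ENNReal.ofReal_mul (by positivity)]

/-- Dyadic size level of a number. -/
def lev (u : ℝ) : ℕ := Nat.log 2 ⌊|u|⌋₊

lemma measurable_lev : Measurable lev := by
  unfold lev
  exact (measurable_from_top (f := Nat.log 2)).comp
    (Nat.measurable_floor.comp (measurable_id.abs))

lemma abs_le_lev (u : ℝ) : |u| ≤ 2 ^ (lev u + 1) := by
  have h1 := Nat.lt_floor_add_one |u|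
  have h2 : ⌊|u|⌋₊ + 1 ≤ 2 ^ (lev u + 1) := Nat.lt_pow_succ_log_self (by norm_num) _
  have h3 : ((⌊|u|⌋₊ + 1 : ℕ) : ℝ) ≤ ((2 ^ (lev u + 1) : ℕ) : ℝ) := by exact_mod_cast h2
  push_cast at h3
  linarith

lemma lev_bound (u : ℝ) (b : ℕ) :
    ((lev u : ℝ) + 2) ^ b * |u| ≤ 6 ^ b * (1 + |u| * Real.log (1 + |u|) ^ b) := by
  have hu := abs_nonneg u
  have hlog : 0 ≤ Real.log (1 + |u|) := Real.log_nonneg (by linarith)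
  by_cases h : |u| < 1
  · have : lev u = 0 := by
      unfold lev
      rw [Nat.floor_eq_zero.mpr h]; simp
    rw [this]
    have h1 : ((0:ℕ) + 2 : ℝ) ^ b ≤ 6 ^ b := by
      push_cast
      exact pow_le_pow_left₀ (by norm_num) (by norm_num) b
    have h2 : |u| ≤ 1 + |u| * Real.log (1 + |u|) ^ b := by
      have : 0 ≤ |u| * Real.log (1 + |u|) ^ b := by positivity
      linarith
    exact mul_le_mul h1 h2 hu (by positivity)
  · push Not at h
    have hf : ⌊|u|⌋₊ ≠ 0 := by
      have := (Nat.one_le_floor_iff |u|).mpr h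
      omega
    have h1 : (2:ℝ) ^ lev u ≤ |u| := by
      have a : 2 ^ lev u ≤ ⌊|u|⌋₊ := Nat.pow_log_le_self 2 hf
      have a' : ((2 ^ lev u : ℕ) : ℝ) ≤ (⌊|u|⌋₊ : ℝ) := by exact_mod_cast a
      push_cast at a'
      exact a'.trans (Nat.floor_le hu)
    have h2 : (lev u : ℝ) * Real.log 2 ≤ Real.log (1 + |u|) := by
      rw [← Real.log_pow]
      exact Real.log_le_log (by positivity) (by linarith)
    have h3 : Real.log 2 ≤ Real.log (1 + |u|) := Real.log_le_log (by norm_num) (by linarith)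
    have h4 := Real.log_two_gt_d9
    have hk : (0:ℝ) ≤ lev u := by positivity
    have h5 : (lev u : ℝ) + 2 ≤ 6 * Real.log (1 + |u|) := by nlinarith
    have h6 := pow_le_pow_left₀ (by positivity) h5 b
    rw [mul_pow] at h6
    have h7 := mul_le_mul_of_nonneg_right h6 hu
    have : (0:ℝ) < 6 ^ b := by positivity
    nlinarith

/-- The numerical series constant. -/
def serC (d : ℕ) : ℝ := ∑' m : ℕ, (m : ℝ) ^ d * (4⁻¹ : ℝ) ^ m

lemma serC_bound (d b K : ℕ) (hb : b ≤ d) :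
    ∑ k ∈ Finset.range K, ((k:ℝ) + 2) ^ b * (4⁻¹ : ℝ) ^ (k + 2) ≤ serC d := by
  have hs : Summable (fun m : ℕ => (m : ℝ) ^ d * (4⁻¹ : ℝ) ^ m) :=
    summable_pow_mul_geometric_of_norm_lt_one d (by norm_num)
  calc ∑ k ∈ Finset.range K, ((k:ℝ) + 2) ^ b * (4⁻¹ : ℝ) ^ (k + 2)
      ≤ ∑ k ∈ Finset.range K, ((k + 2 : ℕ) : ℝ) ^ d * (4⁻¹ : ℝ) ^ (k + 2) := by
        refine Finset.sum_le_sum (fun k _ => ?_)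
        push_cast
        refine mul_le_mul_of_nonneg_right ?_ (by positivity)
        exact pow_le_pow_right₀ (by have : (0:ℝ) ≤ k := by positivity
                                    linarith) hb
    _ ≤ ∑ m ∈ Finset.range (K + 2), (m : ℝ) ^ d * (4⁻¹ : ℝ) ^ m := by
        rw [add_comm K 2, Finset.sum_range_add]
        simp only [add_comm 2]
        have : 0 ≤ ∑ m ∈ Finset.range 2, (m : ℝ) ^ d * (4⁻¹ : ℝ) ^ m :=
          Finset.sum_nonneg (fun _ _ => by positivity)
        linarith
    _ ≤ serC d := hs.sum_le_tsum _ (fun _ _ => by positivity)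

lemma serC_nonneg (d : ℕ) : 0 ≤ serC d := tsum_nonneg (fun _ => by positivity)

lemma lev_sum_bound (d b K : ℕ) (f : (Fin d → ℝ) → ℝ) (hfm : Measurable f)
    (hf : Integrable f (cubeMeasure d))
    (hf2 : Integrable (fun x => |f x| * Real.log (1 + |f x|) ^ b) (cubeMeasure d)) :
    ∑ k ∈ Finset.range K, ((k:ℝ) + 2) ^ b *
        ∫ x in (fun x => lev (f x)) ⁻¹' {k}, |f x| ∂(cubeMeasure d) ≤
      6 ^ b * (1 + ∫ x, |f x| * Real.log (1 + |f x|) ^ b ∂(cubeMeasure d)) := by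
  have hlm : Measurable (fun x => lev (f x)) := measurable_lev.comp hfm
  have hA : ∀ k, MeasurableSet ((fun x => lev (f x)) ⁻¹' {k}) :=
    fun k => hlm (measurableSet_singleton k)
  set Φ : (Fin d → ℝ) → ℝ := fun x => 6 ^ b * (1 + |f x| * Real.log (1 + |f x|) ^ b) with hΦ
  have hΦi : Integrable Φ (cubeMeasure d) := ((integrable_const 1).add hf2).const_mul _
  have hΦ0 : ∀ x, 0 ≤ Φ x := by
    intro x
    have : 0 ≤ Real.log (1 + |f x|) := Real.log_nonneg (by linarith [abs_nonneg (f x)])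
    positivity
  have hI : ∫ x, Φ x ∂(cubeMeasure d) =
      6 ^ b * (1 + ∫ x, |f x| * Real.log (1 + |f x|) ^ b ∂(cubeMeasure d)) := by
    rw [hΦ, integral_const_mul, integral_add (integrable_const 1) hf2]
    simp
  rw [← hI]
  have hU : (⋃ k, (fun x => lev (f x)) ⁻¹' {k}) = Set.univ := by
    ext x; simp
  have hs := hasSum_integral_iUnion (μ := cubeMeasure d) (f := Φ) hA
    (fun i j hij => Disjoint.preimage _ (by simpa using hij)) hΦi.integrableOn
  rw [hU, setIntegral_univ] at hs
  refine le_trans (Finset.sum_le_sum (fun k _ => ?_)) (sum_le_hasSum (Finset.range K)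
    (fun k _ => integral_nonneg hΦ0) hs)
  rw [← integral_const_mul]
  refine setIntegral_mono_on (hf.abs.const_mul _).integrableOn hΦi.integrableOn (hA k)
    (fun x hx => ?_)
  have hx' : lev (f x) = k := hx
  rw [← hx']
  exact lev_bound (f x) b

lemma main_bound (d M : ℕ) (B : Finset (Fin d)) (f : (Fin d → ℝ) → ℝ) (hfm : Measurable f)
    (hf : Integrable f (cubeMeasure d))
    (hf2 : Integrable (fun x => |f x| * Real.log (1 + |f x|) ^ B.card) (cubeMeasure d))
    (n : Fin d → ℕ) (hn : ∀ j, 2 ≤ n j) (hnM : ∀ j, n j < 2 ^ M) :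
    (((2:ℝ) ^ M) ^ d)⁻¹ * ∑ a : Fin d → Fin (2 ^ M), |∑ b : Fin d → Fin (2 ^ M),
      (∏ i, (((2:ℝ) ^ M)⁻¹ * K1 M (n i) (i ∈ B) (a i) (b i))) *
      (((2:ℝ) ^ M) ^ d * ∫ x in cell d M ⁻¹' {b}, f x ∂(cubeMeasure d))| ≤
    12 ^ d * (8 * 6 ^ d + 2 * serC d) *
      (1 + ∫ x, |f x| * Real.log (1 + |f x|) ^ B.card ∂(cubeMeasure d)) := by
  have hlm : Measurable (fun x => lev (f x)) := measurable_lev.comp hfm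
  have hA : ∀ k, MeasurableSet ((fun x => lev (f x)) ⁻¹' {k}) :=
    fun k => hlm (measurableSet_singleton k)
  have hc : ∀ b, MeasurableSet (cell d M ⁻¹' {b}) :=
    fun b => measurable_cell d M (measurableSet_singleton b)
  set V : ℝ := ((2:ℝ) ^ M) ^ d with hV
  have hVpos : 0 < V := by positivity
  have hcard : (Fintype.card (Fin d → Fin (2 ^ M)) : ℝ) = V := by simp [hV]
  set T : (Fin d → Fin (2 ^ M)) → (Fin d → Fin (2 ^ M)) → ℝ := fun a b =>
    ∏ i, (((2:ℝ) ^ M)⁻¹ * K1 M (n i) (i ∈ B) (a i) (b i)) with hT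
  set I : ℕ → (Fin d → Fin (2 ^ M)) → ℝ := fun k b =>
    V * ∫ x in cell d M ⁻¹' {b} ∩ (fun x => lev (f x)) ⁻¹' {k}, f x ∂(cubeMeasure d) with hI
  set α : ℕ → ℝ := fun k =>
    ∫ x in (fun x => lev (f x)) ⁻¹' {k}, |f x| ∂(cubeMeasure d) with hα
  set Ψ : ℝ := ∫ x, |f x| * Real.log (1 + |f x|) ^ B.card ∂(cubeMeasure d) with hΨ
  have hΨ0 : 0 ≤ Ψ := integral_nonneg (fun x => by
    have : 0 ≤ Real.log (1 + |f x|) := Real.log_nonneg (by linarith [abs_nonneg (f x)])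
    positivity)
  have hBd : B.card ≤ d := by simpa using Finset.card_le_univ B
  -- the pieces sum up
  have hsum : ∀ b, HasSum (fun k => I k b)
      (V * ∫ x in cell d M ⁻¹' {b}, f x ∂(cubeMeasure d)) := by
    intro b
    have hU : (⋃ k, cell d M ⁻¹' {b} ∩ (fun x => lev (f x)) ⁻¹' {k}) = cell d M ⁻¹' {b} := by
      ext x; simp
    have hs := hasSum_integral_iUnion (μ := cubeMeasure d) (f := f)
      (s := fun k => cell d M ⁻¹' {b} ∩ (fun x => lev (f x)) ⁻¹' {k})
      (fun k => (hc b).inter (hA k))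
      (fun i j hij => Disjoint.mono Set.inter_subset_right Set.inter_subset_right
        (Disjoint.preimage _ (by simpa using hij))) hf.integrableOn
    rw [hU] at hs
    exact hs.mul_left V
  -- the pieces are bounded
  have hbd : ∀ k b, |I k b| ≤ 2 ^ (k + 1) := by
    intro k b
    have hle : ‖∫ x in cell d M ⁻¹' {b} ∩ (fun x => lev (f x)) ⁻¹' {k}, f x ∂(cubeMeasure d)‖ ≤
        2 ^ (k + 1) * (cubeMeasure d).real (cell d M ⁻¹' {b} ∩ (fun x => lev (f x)) ⁻¹' {k}) := by
      refine norm_setIntegral_le_of_norm_le_const (measure_lt_top _ _) (fun x hx => ?_)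
      have hx' : lev (f x) = k := hx.2
      rw [← hx', Real.norm_eq_abs]
      exact abs_le_lev _
    have hm : (cubeMeasure d).real (cell d M ⁻¹' {b} ∩ (fun x => lev (f x)) ⁻¹' {k}) ≤ V⁻¹ := by
      refine (measureReal_mono Set.inter_subset_left).trans (le_of_eq ?_)
      rw [Measure.real, cell_measure, ENNReal.toReal_ofReal (by positivity)]
    rw [Real.norm_eq_abs] at hle
    simp only [hI]
    rw [abs_mul, abs_of_pos hVpos]
    calc _ ≤ V * (2 ^ (k + 1) * V⁻¹) := by
          refine mul_le_mul_of_nonneg_left (hle.trans ?_) hVpos.le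
          exact mul_le_mul_of_nonneg_left hm (by positivity)
      _ = 2 ^ (k + 1) := by field_simp
  -- their `L^1` norms
  have hL1 : ∀ k, V⁻¹ * ∑ b, |I k b| ≤ α k := by
    intro k
    have e : α k = ∑ b, ∫ x in cell d M ⁻¹' {b} ∩ (fun x => lev (f x)) ⁻¹' {k}, |f x|
        ∂(cubeMeasure d) := by
      have h1 := integral_cell d M (((fun x => lev (f x)) ⁻¹' {k}).indicator (fun x => |f x|))
        (hf.abs.indicator (hA k)) (fun _ => 1)
      simp only [mul_one, one_mul] at h1
      rw [integral_indicator (hA k)] at h1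
      simp only [hα]
      rw [h1]
      refine Finset.sum_congr rfl (fun b _ => ?_)
      rw [setIntegral_indicator (hA k)]
    rw [e, Finset.mul_sum]
    refine Finset.sum_le_sum (fun b _ => ?_)
    simp only [hI]
    rw [abs_mul, abs_of_pos hVpos, inv_mul_cancel_left₀ hVpos.ne']
    exact abs_integral_le_integral_abs
  -- each piece
  have hpiece : ∀ k, V⁻¹ * ∑ a, |∑ b, T a b * I k b| ≤
      (12 ^ d * ((k:ℝ) + 2) ^ B.card) * (2 * (4 * α k + (4⁻¹) ^ (k + 2))) := by
    intro k
    have hk2 : (0:ℝ) < (k:ℝ) + 2 := by positivity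
    have hp1 : 1 < 1 + 1 / ((k:ℝ) + 2) := by
      have : 0 < 1 / ((k:ℝ) + 2) := by positivity
      linarith
    have hp2 : 1 + 1 / ((k:ℝ) + 2) < 2 := by
      have : 1 / ((k:ℝ) + 2) < 1 := by
        rw [div_lt_one hk2]
        have : (0:ℝ) ≤ k := by positivity
        linarith
      linarith
    have hq : 12 / (1 + 1 / ((k:ℝ) + 2) - 1) = 12 * ((k:ℝ) + 2) := by
      rw [add_sub_cancel_left]; field_simp
    have hK : BddP (1 + 1 / ((k:ℝ) + 2)) ((12 ^ d * ((k:ℝ) + 2) ^ B.card) ^ (1 + 1 / ((k:ℝ) + 2))) T := by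
      have ht := BddP_tensor (X := Fin (2 ^ M)) (1 + 1 / ((k:ℝ) + 2)) d
        (fun j => (12 * (if j ∈ B then ((k:ℝ) + 2) else 1)) ^ (1 + 1 / ((k:ℝ) + 2)))
        (fun j => by split_ifs <;> positivity)
        (fun i a b => ((2:ℝ) ^ M)⁻¹ * K1 M (n i) (i ∈ B) a b) (fun j => by
          by_cases hj : j ∈ B
          · have := K1_lp_pos M (n j) (hn j) (hnM j) (j ∈ B) hj _ hp1 hp2
            rw [hq] at this
            simpa only [if_pos hj] using this
          · have := K1_lp_neg M (n j) (hn j) (hnM j) (j ∈ B) hj _ hp1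
            simpa only [if_neg hj, mul_one] using this)
      rw [Real.finsetProd_rpow _ _ (fun j _ => by split_ifs <;> positivity),
        Finset.prod_mul_distrib, Finset.prod_const, Finset.prod_ite_mem, Finset.prod_const] at ht
      simpa using ht
    have := yano_step k (12 ^ d * ((k:ℝ) + 2) ^ B.card) (by positivity) T hK (I k) (hbd k) (α k)
      (by rw [hcard]; exact hL1 k)
    rwa [hcard] at this
  -- finite sums
  have hfin : ∀ K, V⁻¹ * ∑ a, |∑ b, T a b * ∑ k ∈ Finset.range K, I k b| ≤
      12 ^ d * (8 * 6 ^ d + 2 * serC d) * (1 + Ψ) := by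
    intro K
    have h1 : V⁻¹ * ∑ a, |∑ b, T a b * ∑ k ∈ Finset.range K, I k b| ≤
        ∑ k ∈ Finset.range K, V⁻¹ * ∑ a, |∑ b, T a b * I k b| := by
      rw [← Finset.mul_sum, Finset.sum_comm]
      refine mul_le_mul_of_nonneg_left (Finset.sum_le_sum (fun a _ => ?_)) (by positivity)
      have : ∑ b, T a b * ∑ k ∈ Finset.range K, I k b =
          ∑ k ∈ Finset.range K, ∑ b, T a b * I k b := by
        simp only [Finset.mul_sum]
        rw [Finset.sum_comm]
      rw [this]
      exact Finset.abs_sum_le_sum_abs _ _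
    refine h1.trans ((Finset.sum_le_sum (fun k _ => hpiece k)).trans ?_)
    have h2 : ∑ k ∈ Finset.range K,
        (12 ^ d * ((k:ℝ) + 2) ^ B.card) * (2 * (4 * α k + (4⁻¹) ^ (k + 2))) =
        12 ^ d * (8 * ∑ k ∈ Finset.range K, ((k:ℝ) + 2) ^ B.card * α k +
          2 * ∑ k ∈ Finset.range K, ((k:ℝ) + 2) ^ B.card * (4⁻¹ : ℝ) ^ (k + 2)) := by
      rw [Finset.mul_sum, Finset.mul_sum, ← Finset.sum_add_distrib, Finset.mul_sum]
      exact Finset.sum_congr rfl (fun k _ => by ring)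
    rw [h2, mul_assoc]
    refine mul_le_mul_of_nonneg_left ?_ (by positivity)
    have h3 := lev_sum_bound d B.card K f hfm hf hf2
    have h4 := serC_bound d B.card K hBd
    have h5 : (6:ℝ) ^ B.card * (1 + Ψ) ≤ 6 ^ d * (1 + Ψ) :=
      mul_le_mul_of_nonneg_right (pow_le_pow_right₀ (by norm_num) hBd) (by linarith)
    have h6 : 0 ≤ serC d * Ψ := mul_nonneg (serC_nonneg d) hΨ0
    have h7 : ∑ k ∈ Finset.range K, ((k:ℝ) + 2) ^ B.card * α k ≤ 6 ^ B.card * (1 + Ψ) := h3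
    linarith
  -- pass to the limit
  have hlim : Tendsto (fun K => V⁻¹ * ∑ a, |∑ b, T a b * ∑ k ∈ Finset.range K, I k b|) atTop
      (nhds (V⁻¹ * ∑ a, |∑ b, T a b * (V * ∫ x in cell d M ⁻¹' {b}, f x ∂(cubeMeasure d))|)) := by
    refine Tendsto.const_mul _ (tendsto_finsetSum _ (fun a _ => ?_))
    refine (tendsto_finsetSum _ (fun b _ => ?_)).abs
    exact (hsum b).tendsto_sum_nat.const_mul _
  exact le_of_tendsto' hlim hfin

/-- Theorem (logest1). For nonempty `B ⊆ D`, the mixed logarithmic means map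
`L log^{|B|} L(I^d)` into `L^1(I^d)`, with a constant depending only on `d`. -/
theorem stmt0 (d : ℕ) (hd : 1 ≤ d) :
    ∃ C > (0:ℝ), ∀ B : Finset (Fin d), B.Nonempty →
      ∀ f : (Fin d → ℝ) → ℝ, Measurable f → Integrable f (cubeMeasure d) →
        Integrable (fun x => |f x| * Real.log (1 + |f x|) ^ B.card) (cubeMeasure d) →
        ∀ n : Fin d → ℕ, (∀ j, 2 ≤ n j) →
          ∫⁻ x, ENNReal.ofReal |mixedLogMean B f n x| ∂(cubeMeasure d) ≤
            ENNReal.ofReal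
              (C * (1 + ∫ x, |f x| * Real.log (1 + |f x|) ^ B.card ∂(cubeMeasure d))) := by
  refine ⟨12 ^ d * (8 * 6 ^ d + 2 * serC d), ?_, ?_⟩
  · have := serC_nonneg d
    positivity
  intro B _ f hfm hf hf2 n hn
  set M : ℕ := ∑ j, n j with hM
  have hnM : ∀ j, n j < 2 ^ M := fun j =>
    lt_of_lt_of_le Nat.lt_two_pow_self (Nat.pow_le_pow_right (by norm_num)
      (Finset.single_le_sum (f := n) (fun _ _ => Nat.zero_le _) (Finset.mem_univ j)))
  have hae : ∀ᵐ x ∂(cubeMeasure d), x ∈ unitCube d := ae_restrict_mem (measurableSet_unitCube d)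
  set H : (Fin d → Fin (2 ^ M)) → ℝ := fun a => |∑ b : Fin d → Fin (2 ^ M),
      (∏ i, (((2:ℝ) ^ M)⁻¹ * K1 M (n i) (i ∈ B) (a i) (b i))) *
      (((2:ℝ) ^ M) ^ d * ∫ x in cell d M ⁻¹' {b}, f x ∂(cubeMeasure d))| with hH
  have e : ∫⁻ x, ENNReal.ofReal |mixedLogMean B f n x| ∂(cubeMeasure d) =
      ∫⁻ x, ENNReal.ofReal (H (cell d M x)) ∂(cubeMeasure d) := by
    refine lintegral_congr_ae ?_
    filter_upwards [hae] with x hx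
    rw [mixedLogMean_eq d M f hf B n hnM x hx]
  rw [e, lintegral_cell d M H (fun _ => abs_nonneg _)]
  exact ENNReal.ofReal_le_ofReal (main_bound d M B f hfm hf hf2 n hn hnM)

end
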